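/- arXiv:2503.24186 — 7 statements merged into one kernel-verified Lean document; each statement's English description precedes it below -/
import Mathlib

section
/- Let R be a commutative Noetherian local ring whose maximal ideal m satisfies m² = 0. Then for every finitely generated R-module M, ca_R^2(M) = ca_R(M). -/
open CategoryTheory

noncomputable section

universe u

variable (R : Type u) [CommRing R]

/-- The `n`-th Ext group of two `R`-modules, as an `R`-module. -/
abbrev ExtM (n : ℕ) (M N : ModuleCat.{u} R) : ModuleCat.{u} R :=
  ((Ext R (ModuleCat.{u} R) n).obj (Opposite.op M)).obj N

/-- The `n`-th cohomological annihilator of a module `M`: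
elements `r` with `r • Ext^i(M, N) = 0` for all `i ≥ n` and all finitely generated `N`. -/
def caN (n : ℕ) (M : ModuleCat.{u} R) : Ideal R where
  carrier := {r | ∀ i, n ≤ i → ∀ N : ModuleCat.{u} R, Module.Finite R N →
    ∀ x : ExtM R i M N, r • x = 0}
  zero_mem' := by intro i _ N _ x; simp
  add_mem' := by
    intro a b ha hb i hi N hN x
    rw [add_smul, ha i hi N hN x, hb i hi N hN x, add_zero]
  smul_mem' := by
    intro c r hr i hi N hN x
    simp only [smul_eq_mul, mul_smul, hr i hi N hN x, smul_zero]

/-- The cohomological annihilator `ca_R(M) = ⋃ₙ ca_R^n(M)`. -/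
def ca (M : ModuleCat.{u} R) : Set R := ⋃ n : ℕ, (caN R n M : Set R)

/-- The `n`-th co-cohomological annihilator of a module `M`. -/
def cocaN (n : ℕ) (M : ModuleCat.{u} R) : Ideal R where
  carrier := {r | ∀ i, n ≤ i → ∀ N : ModuleCat.{u} R, Module.Finite R N →
    ∀ x : ExtM R i N M, r • x = 0}
  zero_mem' := by intro i _ N _ x; simp
  add_mem' := by
    intro a b ha hb i hi N hN x
    rw [add_smul, ha i hi N hN x, hb i hi N hN x, add_zero]
  smul_mem' := by
    intro c r hr i hi N hN x
    simp only [smul_eq_mul, mul_smul, hr i hi N hN x, smul_zero]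

/-- The co-cohomological annihilator `coca_R(M) = ⋃ₙ coca_R^n(M)`. -/
def coca (M : ModuleCat.{u} R) : Set R := ⋃ n : ℕ, (cocaN R n M : Set R)

/-- `M` has projective dimension at most `n`: `Ext^i(M, -) = 0` for all `i > n`. -/
def projDimLE (n : ℕ) (M : ModuleCat.{u} R) : Prop :=
  ∀ i : ℕ, n < i → ∀ N : ModuleCat.{u} R, Subsingleton (ExtM R i M N)

/-- `M` has injective dimension at most `n`: `Ext^i(-, M) = 0` for all `i > n`. -/
def injDimLE (n : ℕ) (M : ModuleCat.{u} R) : Prop :=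
  ∀ i : ℕ, n < i → ∀ N : ModuleCat.{u} R, Subsingleton (ExtM R i N M)

/-- `K` is an `n`-th syzygy of `M` with respect to resolutions by
finitely generated projective modules. -/
def IsSyz : ℕ → ModuleCat.{u} R → ModuleCat.{u} R → Prop
  | 0, M, K => Nonempty (K ≃ₗ[R] M)
  | n + 1, M, K => ∃ (L P : ModuleCat.{u} R), IsSyz n M L ∧
      Module.Finite R P ∧ Module.Projective R P ∧
      ∃ f : P →ₗ[R] L, Function.Surjective f ∧ Nonempty (K ≃ₗ[R] LinearMap.ker f)

/-- `X` is a direct summand of `Y`. -/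
def IsSummand (X Y : ModuleCat.{u} R) : Prop :=
  ∃ (i : X →ₗ[R] Y) (p : Y →ₗ[R] X), p.comp i = LinearMap.id

/-- `X` is a direct summand of a finite direct sum of copies of `G`. -/
def IsSummandOfCopies (G X : ModuleCat.{u} R) : Prop :=
  ∃ k : ℕ, IsSummand R X (ModuleCat.of R (Fin k → G))

/-- The subcategories `thickⁿ(G)` of `mod R`. -/
def thickN (G : ModuleCat.{u} R) : ℕ → Set (ModuleCat.{u} R)
  | 0 => {X | Subsingleton X}
  | n + 1 => {X | ∃ (Y Y₁ Y₂ : ModuleCat.{u} R) (f : Y₁ →ₗ[R] Y) (g : Y →ₗ[R] Y₂),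
      Function.Injective f ∧ Function.Surjective g ∧ LinearMap.ker g = LinearMap.range f ∧
      ((Y₁ ∈ thickN G n ∧ IsSummandOfCopies R G Y₂) ∨
        (IsSummandOfCopies R G Y₁ ∧ Y₂ ∈ thickN G n)) ∧
      IsSummand R X Y}

/-- The balls `|G|ₙ` of Dao–Takahashi. -/
def ballN (G : ModuleCat.{u} R) : ℕ → Set (ModuleCat.{u} R)
  | 0 => {X | Subsingleton X}
  | n + 1 => {Y | ∃ (Y' Y₁ Y₂ : ModuleCat.{u} R)
      (f : Y₁ →ₗ[R] (ModuleCat.of R (Y × Y'))) (g : (ModuleCat.of R (Y × Y')) →ₗ[R] Y₂),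
      Function.Injective f ∧ Function.Surjective g ∧ LinearMap.ker g = LinearMap.range f ∧
      Y₁ ∈ ballN G n ∧ IsSummandOfCopies R G Y₂}

/-- A regular local ring: a Noetherian local ring whose maximal ideal can be
generated by `dim R` elements. -/
def IsRegularLocal (A : Type u) [CommRing A] [IsLocalRing A] : Prop :=
  IsNoetherianRing A ∧ ∃ s : Finset A, Ideal.span (↑s : Set A) = IsLocalRing.maximalIdeal A ∧
    (s.card : WithBot ℕ∞) = ringKrullDim A

/-- The localization of a module at a prime, as a module category object over the local ring. -/
abbrev locMod (p : PrimeSpectrum R) (M : ModuleCat.{u} R) :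
    ModuleCat.{u} (Localization.AtPrime p.asIdeal) :=
  ModuleCat.of (Localization.AtPrime p.asIdeal) (LocalizedModule p.asIdeal.primeCompl M)

/-- Depth of a module over a local ring, via vanishing of `Ext` from the residue field. -/
def depthE (A : Type u) [CommRing A] [IsLocalRing A] (N : ModuleCat.{u} A) : ℕ∞ :=
  sInf ((fun n : ℕ => (n : ℕ∞)) ''
    {n : ℕ | ¬ Subsingleton (ExtM A n (ModuleCat.of A (IsLocalRing.ResidueField A)) N)})

/-- The large restricted flat dimension of `M`. -/
def rfdE (M : ModuleCat.{u} R) : ℕ∞ :=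
  ⨆ p : PrimeSpectrum R,
    (depthE (Localization.AtPrime p.asIdeal)
        (ModuleCat.of (Localization.AtPrime p.asIdeal) (Localization.AtPrime p.asIdeal)) -
      depthE (Localization.AtPrime p.asIdeal) (locMod R p M))

/-- `r • f` factors through a finitely generated projective module. -/
def FactorsThroughProj (M : ModuleCat.{u} R) (f : M →ₗ[R] M) : Prop :=
  ∃ P : ModuleCat.{u} R, Module.Projective R P ∧ Module.Finite R P ∧
    ∃ (g : M →ₗ[R] P) (h : P →ₗ[R] M), h.comp g = f

/-- The annihilator of the stable endomorphism ring of `M`. -/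
def annStableEnd (M : ModuleCat.{u} R) : Set R :=
  {r | ∀ f : M →ₗ[R] M, FactorsThroughProj R M (r • f)}

/-- A resolving subcategory of `mod R`. -/
def IsResolving (C : Set (ModuleCat.{u} R)) : Prop :=
  (∀ P : ModuleCat.{u} R, Module.Finite R P → Module.Projective R P → P ∈ C) ∧
  (∀ X Y : ModuleCat.{u} R, Y ∈ C → IsSummand R X Y → X ∈ C) ∧
  (∀ (Y Y₁ Y₂ : ModuleCat.{u} R) (f : Y₁ →ₗ[R] Y) (g : Y →ₗ[R] Y₂),
    Function.Injective f → Function.Surjective g → LinearMap.ker g = LinearMap.range f →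
    Y₁ ∈ C → Y₂ ∈ C → Y ∈ C) ∧
  (∀ X ∈ C, ∀ K : ModuleCat.{u} R, IsSyz R 1 X K → K ∈ C)

/-- The smallest resolving subcategory containing `G`. -/
def resCl (G : ModuleCat.{u} R) : Set (ModuleCat.{u} R) :=
  ⋂₀ {C | IsResolving R C ∧ G ∈ C}

end

section Helpers

universe u

variable (R : Type u) [CommRing R]

theorem sc_kill (S : ShortComplex (ModuleCat.{u} R)) (r : R) :
    (∀ x : S.homology, r • x = 0) ↔ ∀ y : S.X₂, S.g y = 0 → ∃ z, S.f z = r • y := by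
  have e : S.homology ≃ₗ[R] S.moduleCatLeftHomologyData.H := S.moduleCatHomologyIso.toLinearEquiv
  have h1 : (∀ x : S.homology, r • x = 0) ↔ (∀ x : S.moduleCatLeftHomologyData.H, r • x = 0) := by
    constructor
    · intro h x
      have := congrArg e (h (e.symm x))
      simpa using this
    · intro h x
      apply e.injective
      simpa using h (e x)
  rw [h1]
  change (∀ x : (LinearMap.ker S.g.hom ⧸ LinearMap.range S.moduleCatToCycles), r • x = 0) ↔ _
  constructor
  · intro h y hy
    have := h (Submodule.Quotient.mk ⟨y, hy⟩)
    rw [← Submodule.Quotient.mk_smul, Submodule.Quotient.mk_eq_zero] at this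
    obtain ⟨z, hz⟩ := this
    exact ⟨z, congrArg Subtype.val hz⟩
  · intro h x
    obtain ⟨⟨y, hy⟩, rfl⟩ := Submodule.Quotient.mk_surjective _ x
    rw [← Submodule.Quotient.mk_smul, Submodule.Quotient.mk_eq_zero]
    obtain ⟨z, hz⟩ := h y hy
    exact ⟨z, Subtype.ext hz⟩

theorem iso_kill {A B : ModuleCat.{u} R} (i : A ≅ B) (r : R) (h : ∀ x : A, r • x = 0) (x : B) :
    r • x = 0 := by
  have := congrArg i.toLinearEquiv (h (i.toLinearEquiv.symm x))
  rwa [map_smul, LinearEquiv.apply_symm_apply, map_zero] at this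

theorem extM_kill (X N : ModuleCat.{u} R) (P : ProjectiveResolution X) (n : ℕ) (r : R) :
    (∀ x : ExtM R (n+1) X N, r • x = 0) ↔
    ∀ f : P.complex.X (n+1) ⟶ N, P.complex.d (n+2) (n+1) ≫ f = 0 →
      ∃ g : P.complex.X n ⟶ N, P.complex.d (n+1) n ≫ g = r • f := by
  let K := P.complex.linearYonedaObj R N
  let i : ExtM R (n+1) X N ≅ (K.sc' n (n+1) (n+2)).homology :=
    P.isoExt (n+1) N ≪≫ ShortComplex.homologyMapIso (K.isoSc' n (n+1) (n+2) (by simp) (by simp))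
  have h1 := sc_kill R (K.sc' n (n+1) (n+2)) r
  have : (∀ x : ExtM R (n+1) X N, r • x = 0) ↔
     (∀ x : (K.sc' n (n+1) (n+2)).homology, r • x = 0) :=
    ⟨fun h => iso_kill R i r h, fun h => iso_kill R i.symm r h⟩
  rw [this, h1]
  exact Iff.rfl

theorem ext_kill (X N : ModuleCat.{u} R) (P : ProjectiveResolution X) (n : ℕ) (r : R) :
    (∀ x : Abelian.Ext X N (n+1), r • x = 0) ↔
    ∀ f : P.complex.X (n+1) ⟶ N, P.complex.d (n+2) (n+1) ≫ f = 0 →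
      ∃ g : P.complex.X n ⟶ N, P.complex.d (n+1) n ≫ g = r • f := by
  have key : ∀ (f : P.complex.X (n+1) ⟶ N) (hf : P.complex.d (n+2) (n+1) ≫ f = 0),
      r • P.extMk f (n+2) rfl hf = 0 ↔ 
      ∃ g : P.complex.X n ⟶ N, P.complex.d (n+1) n ≫ g = r • f := by
    intro f hf
    rw [Abelian.Ext.smul_eq_comp_mk₀, P.extMk_comp_mk₀, P.extMk_eq_zero_iff _ _ _ _ n rfl]
    simp
  constructor
  · intro h f hf
    exact (key f hf).1 (h _)
  · intro h x
    obtain ⟨f, hf, rfl⟩ := P.extMk_surjective x (n+2) rfl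
    exact (key f hf).2 (h f hf)

theorem bridge (X N : ModuleCat.{u} R) (n : ℕ) (r : R) :
    (∀ x : ExtM R (n+1) X N, r • x = 0) ↔ (∀ x : Abelian.Ext X N (n+1), r • x = 0) := by
  let P := ProjectiveResolution.of X
  rw [extM_kill R X N P, ext_kill R X N P]

open IsLocalRing in
theorem min_cover [IsLocalRing R] (X : Type u) [AddCommGroup X] [Module R X] [Module.Finite R X] :
    ∃ (s : ℕ) (f : (Fin s → R) →ₗ[R] X), Function.Surjective f ∧
      ∀ v, f v = 0 → ∀ i, v i ∈ maximalIdeal R := by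
  letI : Field (R ⧸ maximalIdeal R) := Ideal.Quotient.field _
  let V := X ⧸ (maximalIdeal R • (⊤ : Submodule R X))
  haveI : Module.Finite (R ⧸ maximalIdeal R) V := Module.Finite.of_restrictScalars_finite R _ _
  let b := Module.finBasis (R ⧸ maximalIdeal R) V
  choose y hy using fun i => Submodule.Quotient.mk_surjective _ (b i)
  refine ⟨_, Fintype.linearCombination R y, ?_, ?_⟩
  · rw [← LinearMap.range_eq_top, ← IsLocalRing.map_mkQ_eq_top, eq_top_iff]
    rintro v -
    choose c hc using fun i => Ideal.Quotient.mk_surjective (b.repr v i)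
    refine ⟨Fintype.linearCombination R y c, ⟨c, rfl⟩, ?_⟩
    rw [Fintype.linearCombination_apply, map_sum]
    conv_rhs => rw [← b.sum_repr v]
    refine Finset.sum_congr rfl fun i _ => ?_
    rw [← hc, ← hy, map_smul]
    rfl
  · intro v hv i
    have h1 : ∑ i, (Ideal.Quotient.mk (maximalIdeal R) (v i)) • b i = 0 := by
      have := congrArg (Submodule.mkQ (maximalIdeal R • (⊤ : Submodule R X))) hv
      rw [Fintype.linearCombination_apply, map_sum, map_zero] at this
      rw [← this]
      refine Finset.sum_congr rfl fun i _ => ?_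
      rw [← hy, map_smul]
      rfl
    have := Fintype.linearIndependent_iff.1 b.linearIndependent _ h1 i
    exact Ideal.Quotient.eq_zero_iff_mem.1 this

open IsLocalRing in
theorem split_inj [IsLocalRing R] {K L : Type u} [AddCommGroup K] [Module R K]
    [AddCommGroup L] [Module R L] (hK : ∀ r ∈ maximalIdeal R, ∀ x : K, r • x = 0)
    (hL : ∀ r ∈ maximalIdeal R, ∀ x : L, r • x = 0) (φ : K →ₗ[R] L)
    (hφ : Function.Injective φ) : ∃ ψ : L →ₗ[R] K, ψ ∘ₗ φ = LinearMap.id := by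
  letI : Field (R ⧸ maximalIdeal R) := Ideal.Quotient.field _
  have tK : Module.IsTorsionBySet R K (maximalIdeal R : Set R) := fun x a => hK a a.2 x
  have tL : Module.IsTorsionBySet R L (maximalIdeal R : Set R) := fun x a => hL a a.2 x
  letI := tK.module
  letI := tL.module
  haveI : IsScalarTower R (R ⧸ maximalIdeal R) K := tK.isScalarTower
  haveI : IsScalarTower R (R ⧸ maximalIdeal R) L := tL.isScalarTower
  let φ' : K →ₗ[R ⧸ maximalIdeal R] L :=
    φ.extendScalarsOfSurjective Ideal.Quotient.mk_surjective
  obtain ⟨ψ, hψ⟩ := LinearMap.exists_leftInverse_of_injective φ' (LinearMap.ker_eq_bot.2 hφ)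
  refine ⟨ψ.restrictScalars R, ?_⟩
  ext x
  exact LinearMap.congr_fun hψ x

open IsLocalRing in
theorem retract [IsLocalRing R] (hm : (maximalIdeal R) ^ 2 = ⊥) (a : R) (ha : a ∈ maximalIdeal R)
    (ha0 : a ≠ 0) {K : Type u} [AddCommGroup K] [Module R K]
    (hK : ∀ r ∈ maximalIdeal R, ∀ x : K, r • x = 0) {s : ℕ} (f : (Fin s → R) →ₗ[R] K)
    (hf : Function.Surjective f) (hker : ∀ v, f v = 0 → ∀ i, v i ∈ maximalIdeal R) :
    ∃ (φ : K →ₗ[R] LinearMap.ker f) (ψ : LinearMap.ker f →ₗ[R] K), ψ ∘ₗ φ = LinearMap.id := by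
  have hmul : ∀ x ∈ maximalIdeal R, ∀ y ∈ maximalIdeal R, x * y = 0 := by
    intro x hx y hy
    have := Ideal.mul_mem_mul hx hy
    rwa [← pow_two, hm] at this
  let g : (Fin s → R) →ₗ[R] LinearMap.ker f :=
    LinearMap.codRestrict _ (a • LinearMap.id) (fun v => by
      simp [LinearMap.mem_ker, hK a ha])
  have hg : ∀ v, g v = 0 ↔ f v = 0 := by
    intro v
    have h1 : g v = 0 ↔ ∀ i, a * v i = 0 := by
      rw [Subtype.ext_iff, funext_iff]; rfl
    rw [h1]
    constructor
    · intro h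
      have hv : ∀ i, v i ∈ maximalIdeal R := by
        intro i
        rw [mem_maximalIdeal, mem_nonunits_iff]
        intro hu
        exact ha0 (hu.mul_left_eq_zero.1 (h i))
      rw [pi_eq_sum_univ v, map_sum]
      exact Finset.sum_eq_zero fun i _ => by rw [map_smul, hK _ (hv i)]
    · intro h i
      exact hmul _ ha _ (hker v h i)
  let φ : K →ₗ[R] LinearMap.ker f :=
    ((LinearMap.ker f).liftQ g (fun v hv => (hg v).2 hv)) ∘ₗ
      (f.quotKerEquivOfSurjective hf).symm.toLinearMap
  have hφ : ∀ v, φ (f v) = g v := by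
    intro v
    have : (f.quotKerEquivOfSurjective hf).symm (f v) = Submodule.Quotient.mk v := by
      rw [LinearEquiv.symm_apply_eq]; rfl
    simp only [φ, LinearMap.comp_apply, LinearEquiv.coe_coe, this]
    exact Submodule.liftQ_apply _ _ _
  have inj : Function.Injective φ := by
    rw [injective_iff_map_eq_zero]
    intro x hx
    obtain ⟨v, rfl⟩ := hf x
    rw [hφ, hg] at hx
    exact hx
  obtain ⟨ψ, hψ⟩ := split_inj R hK (fun r hr x => by
    ext i; exact hmul _ hr _ (hker _ x.2 i)) φ inj
  exact ⟨φ, ψ, hψ⟩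

theorem ext_kill_of_id {K N : ModuleCat.{u} R} {n : ℕ} {r : R} (h : ∀ x : K, r • x = 0)
    (x : Abelian.Ext K N n) : r • x = 0 := by
  have h0 : r • 𝟙 K = 0 := by
    ext y; exact h y
  have h1 := Abelian.Ext.mk₀_id_comp x
  rw [← h1, ← Abelian.Ext.smul_comp, ← Abelian.Ext.mk₀_smul, h0]
  simp

/-- descending step -/
theorem ext_descend {K N : ModuleCat.{u} R} {s : ℕ} (f : (Fin s → R) →ₗ[R] K)
    (hf : Function.Surjective f) (φ : K →ₗ[R] LinearMap.ker f) (ψ : LinearMap.ker f →ₗ[R] K)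
    (hψ : ψ ∘ₗ φ = LinearMap.id) (n : ℕ) (h : ∀ x : Abelian.Ext K N (n + 2), x = 0)
    (x : Abelian.Ext K N (n + 1)) : x = 0 := by
  have hS : f.shortComplexKer.ShortExact := LinearMap.shortExact_shortComplexKer hf
  let p : f.shortComplexKer.X₁ ⟶ K := ModuleCat.ofHom ψ
  let i : K ⟶ f.shortComplexKer.X₁ := ModuleCat.ofHom φ
  have hip : i ≫ p = 𝟙 K := by
    ext y; exact LinearMap.congr_fun hψ y
  haveI : Projective f.shortComplexKer.X₂ :=
    (IsProjective.iff_projective (R := R) (Fin s → R)).1 inferInstance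
  obtain ⟨x₂, hx₂⟩ := Abelian.Ext.contravariant_sequence_exact₁ hS N
    ((Abelian.Ext.mk₀ p).comp x (zero_add _)) (n₁ := n + 2) (by omega) (h _)
  rw [Abelian.Ext.eq_zero_of_projective x₂, Abelian.Ext.comp_zero] at hx₂
  have h1 := Abelian.Ext.mk₀_id_comp x
  rw [← h1, ← hip, ← Abelian.Ext.mk₀_comp_mk₀_assoc, ← hx₂, Abelian.Ext.comp_zero]

end Helpers

open IsLocalRing in
/-- over a Noetherian local ring with `m² = 0`,
`ca_R²(M) = ca_R(M)` for every finitely generated `M`. -/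
theorem stmt11 (R : Type u) [CommRing R] [IsNoetherianRing R] [IsLocalRing R]
    (hm : (IsLocalRing.maximalIdeal R) ^ 2 = ⊥)
    (M : ModuleCat.{u} R) [Module.Finite R M] :
    (caN R 2 M : Set R) = ca R M := by
  apply Set.Subset.antisymm
  · exact Set.subset_iUnion (fun n => (caN R n M : Set R)) 2
  obtain ⟨s, f, hf, hker⟩ := min_cover R M
  have hS : f.shortComplexKer.ShortExact := LinearMap.shortExact_shortComplexKer hf
  haveI : Projective f.shortComplexKer.X₂ :=
    (IsProjective.iff_projective (R := R) (Fin s → R)).1 inferInstance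
  have hmul : ∀ x ∈ maximalIdeal R, ∀ y ∈ maximalIdeal R, x * y = 0 := by
    intro x hx y hy
    have := Ideal.mul_mem_mul hx hy
    rwa [← pow_two, hm] at this
  have hK : ∀ r ∈ maximalIdeal R, ∀ x : f.shortComplexKer.X₁, r • x = 0 := by
    intro r hr x
    exact Subtype.ext (funext fun i => hmul _ hr _ (hker _ x.2 i))
  have up : ∀ r : R, (∀ (n : ℕ) (N : ModuleCat.{u} R), Module.Finite R N →
      ∀ x : Abelian.Ext f.shortComplexKer.X₁ N (n + 1), r • x = 0) → r ∈ caN R 2 M := by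
    intro r h i hi N hN
    obtain ⟨n, rfl⟩ := Nat.exists_eq_add_of_le' hi
    refine (bridge R M N (n + 1) r).2 fun x => ?_
    obtain ⟨y, rfl⟩ := Abelian.Ext.contravariant_sequence_exact₃ hS N x
      (Abelian.Ext.eq_zero_of_projective _) (n₀ := n + 1) (by omega)
    rw [← Abelian.Ext.comp_smul, h n N hN, Abelian.Ext.comp_zero]
  intro r hr
  obtain ⟨n, hn⟩ := Set.mem_iUnion.1 hr
  by_cases hrm : r ∈ maximalIdeal R
  · exact up r fun n N _ x => ext_kill_of_id R (hK r hrm) x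
  have hru : IsUnit r := by
    by_contra hc
    exact hrm ((mem_maximalIdeal r).2 hc)
  by_cases hm0 : maximalIdeal R = ⊥
  · refine up r fun n N _ x => ext_kill_of_id R (fun y => ?_) x
    refine Subtype.ext (funext fun i => ?_)
    have : y.1 i = 0 := by
      have := hker _ y.2 i
      rwa [hm0] at this
    change r * y.1 i = 0
    rw [this, mul_zero]
  obtain ⟨a, ha, ha0⟩ := Submodule.exists_mem_ne_zero_of_ne_bot hm0
  haveI : Module.Finite R f.shortComplexKer.X₁ :=
    inferInstanceAs (Module.Finite R (LinearMap.ker f))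
  obtain ⟨t, g, hg, hgker⟩ := min_cover R f.shortComplexKer.X₁
  obtain ⟨φ, ψ, hψ⟩ := retract R hm a ha ha0 hK g hg hgker
  have high : ∀ (j : ℕ) (N : ModuleCat.{u} R), Module.Finite R N → n ≤ j →
      ∀ x : Abelian.Ext f.shortComplexKer.X₁ N (j + 1), x = 0 := by
    intro j N hN hj x
    have h0 : ∀ y : Abelian.Ext M N (j + 2), y = 0 := by
      intro y
      exact hru.smul_eq_zero.1 ((bridge R M N (j + 1) r).1 (hn (j + 2) (by omega) N hN) y)
    obtain ⟨x₂, rfl⟩ := Abelian.Ext.contravariant_sequence_exact₁ hS N x (n₁ := j + 2)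
      (by omega) (h0 _)
    rw [Abelian.Ext.eq_zero_of_projective x₂, Abelian.Ext.comp_zero]
  have all : ∀ (d j : ℕ) (N : ModuleCat.{u} R), Module.Finite R N → n ≤ j + d →
      ∀ x : Abelian.Ext f.shortComplexKer.X₁ N (j + 1), x = 0 := by
    intro d
    induction d with
    | zero => exact fun j N hN hj => high j N hN hj
    | succ d ih =>
      intro j N hN hj
      exact ext_descend R g hg φ ψ hψ j (ih (j + 1) N hN (by omega))
  exact up r fun j N hN x => by rw [all n j N hN (by omega) x, smul_zero]
end

section
/- Let R be a commutative Noetherian ring and M an R-module. Then coca_R(M) = R if and only if M has finite injective dimension over R. -/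
open CategoryTheory

open Limits in
lemma cocaAux_extM_iff {R : Type u} [CommRing R] (N M : ModuleCat.{u} R) (n : ℕ) :
    Subsingleton (ExtM R (n + 1) N M) ↔ Subsingleton (Abelian.Ext.{u} N M (n + 1)) := by
  let P := projectiveResolution N
  have key : Subsingleton (Abelian.Ext.{u} N M (n + 1)) ↔
      ∀ f : P.complex.X (n + 1) ⟶ M, P.complex.d (n + 2) (n + 1) ≫ f = 0 →
        ∃ g : P.complex.X n ⟶ M, P.complex.d (n + 1) n ≫ g = f := by
    constructor
    · intro h f hf
      exact (P.extMk_eq_zero_iff f (n + 2) rfl hf n rfl).1 (Subsingleton.elim _ _)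
    · intro h
      refine ⟨fun a b => ?_⟩
      have z : ∀ a : Abelian.Ext.{u} N M (n + 1), a = 0 := by
        intro a
        obtain ⟨f, hf, rfl⟩ := P.extMk_surjective a (n + 2) rfl
        exact (P.extMk_eq_zero_iff f (n + 2) rfl hf n rfl).2 (h f hf)
      rw [z a, z b]
  rw [key, ← ModuleCat.isZero_iff_subsingleton, (P.isoExt (R := R) (n + 1) M).isZero_iff,
    ← HomologicalComplex.exactAt_iff_isZero_homology,
    HomologicalComplex.exactAt_iff' _ n (n + 1) (n + 2) (by simp) (by simp),
    ShortComplex.moduleCat_exact_iff]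
  rfl

open Limits in
lemma cocaAux_injDim {R : Type u} [CommRing R] (n : ℕ) (M : ModuleCat.{u} R)
    (h : ∀ i, n ≤ i → ∀ N : ModuleCat.{u} R, Module.Finite R N →
      Subsingleton (Abelian.Ext.{u} N M (i + 1))) : HasInjectiveDimensionLT M (n + 1) := by
  induction n generalizing M with
  | zero =>
    rw [zero_add, ← injective_iff_hasInjectiveDimensionLT_one,
      ← Module.injective_iff_injective_object, ← Module.Baer.iff_injective]
    intro I g
    let i : ModuleCat.of R I ⟶ ModuleCat.of R R := ModuleCat.ofHom I.subtype
    have : Mono i := (ModuleCat.mono_iff_injective _).2 I.subtype_injective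
    let S := ShortComplex.mk i (cokernel.π i) (cokernel.condition i)
    have hS : S.ShortExact := { exact := ShortComplex.exact_cokernel i }
    have hfin : Module.Finite R (cokernel i : ModuleCat.{u} R) :=
      Module.Finite.of_surjective (cokernel.π i).hom
        ((ModuleCat.epi_iff_surjective _).1 inferInstance)
    have := h 0 le_rfl _ hfin
    obtain ⟨φ, hφ⟩ := Abelian.Ext.contravariant_sequence_exact₁ hS M
      (Abelian.Ext.mk₀ (ModuleCat.ofHom g : S.X₁ ⟶ M)) (zero_add 1)
      (Subsingleton.elim (α := Abelian.Ext.{u} (cokernel i) M (0 + 1)) _ _)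
    obtain ⟨φ, rfl⟩ := Abelian.Ext.homEquiv₀.symm.surjective φ
    have e : i ≫ φ = ModuleCat.ofHom g :=
      Abelian.Ext.homEquiv₀.symm.injective (by simpa using hφ)
    refine ⟨φ.hom, fun x hx => ?_⟩
    exact congrArg (fun k => k.hom ⟨x, hx⟩) e
  | succ n ih =>
    obtain ⟨I, inj, f, monof⟩ := (inferInstance : EnoughInjectives (ModuleCat.{u} R)).1 M
    let S := ShortComplex.mk f (cokernel.π f) (cokernel.condition f)
    have hS : S.ShortExact := { exact := ShortComplex.exact_cokernel f }
    refine (hS.hasInjectiveDimensionLT_X₃_iff n inj).1 (ih S.X₃ fun i hi N hN => ?_)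
    have := h (i + 1) (by omega) N hN
    have z : ∀ x : Abelian.Ext.{u} N S.X₃ (i + 1), x = 0 := by
      intro x
      obtain ⟨y, rfl⟩ := Abelian.Ext.covariant_sequence_exact₃ N hS x rfl
        (Subsingleton.elim (α := Abelian.Ext.{u} N M (i + 1 + 1)) _ _)
      have : Injective S.X₂ := inj
      rw [y.eq_zero_of_injective, Abelian.Ext.zero_comp]
    exact ⟨fun a b => by rw [z a, z b]⟩

/-- `coca_R(M) = R` iff `M` has finite injective dimension. -/
theorem stmt12 (R : Type u) [CommRing R] [IsNoetherianRing R] (M : ModuleCat.{u} R) :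
    coca R M = Set.univ ↔ ∃ n : ℕ, injDimLE R n M := by
  constructor
  · intro h
    have h1 : (1 : R) ∈ coca R M := h ▸ Set.mem_univ _
    obtain ⟨n, hn⟩ := Set.mem_iUnion.1 h1
    have hid : HasInjectiveDimensionLT M (n + 1) := by
      refine cocaAux_injDim n M fun i hi N hN => (cocaAux_extM_iff N M i).1 ⟨fun a b => ?_⟩
      have ha := hn (i + 1) (by omega) N hN a
      have hb := hn (i + 1) (by omega) N hN b
      rw [one_smul] at ha hb
      rw [ha, hb]
    refine ⟨n, fun i hi N => ?_⟩
    obtain ⟨j, rfl⟩ : ∃ j, i = j + 1 := ⟨i - 1, by omega⟩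
    exact (cocaAux_extM_iff N M j).2
      (HasInjectiveDimensionLT.subsingleton M (n + 1) (j + 1) hi N)
  · rintro ⟨n, hn⟩
    refine Set.eq_univ_of_forall fun r => Set.mem_iUnion.2 ⟨n + 1, ?_⟩
    intro i hi N _ x
    have := hn i hi N
    exact Subsingleton.elim _ _
end

section
/- Let R be a commutative Noetherian ring, M an R-module, and n > 0. Then {p ∈ Spec(R) : id_{R_p}(M_p) ≥ n} = ⋃_{N fin. gen.} Supp_R Ext_R^n(N, M), i.e. a prime p satisfies inj.dim_{R_p}(M_p) ≥ n if and only if Ext_R^n(N,M)_p ≠ 0 for some finitely generated R-module N. -/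
open CategoryTheory

open CategoryTheory Abelian

/-- Torsion of `Ext`. -/
def ExtTors {A : Type u} [CommRing A] (S : Submonoid A) (N M : ModuleCat.{u} A) (n : ℕ) : Prop :=
  ∀ x : Abelian.Ext.{u} N M n, ∃ s ∈ S, s • x = 0

section bridge
variable {A : Type u} [CommRing A] (S : Submonoid A) (N M : ModuleCat.{u} A) (n : ℕ)

/-- Torsion of `Ext` computed by a resolution -/
def ResTors (P : ProjectiveResolution N) : Prop :=
  ∀ f : P.complex.X (n + 1) ⟶ M, P.complex.d (n + 2) (n + 1) ≫ f = 0 →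
    ∃ s ∈ S, ∃ g : P.complex.X n ⟶ M, P.complex.d (n + 1) n ≫ g = s • f

lemma smul_extMk (P : ProjectiveResolution N) (f : P.complex.X (n + 1) ⟶ M)
    (hf : P.complex.d (n + 2) (n + 1) ≫ f = 0) (s : A) :
    s • P.extMk f (n + 2) rfl hf = P.extMk (s • f) (n + 2) rfl (by simp [hf]) := by
  rw [Ext.smul_eq_comp_mk₀, ProjectiveResolution.extMk_comp_mk₀]
  simp

lemma extTors_iff (P : ProjectiveResolution N) : ExtTors S N M (n + 1) ↔ ResTors S N M n P := by
  constructor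
  · intro h f hf
    obtain ⟨s, hs, h0⟩ := h (P.extMk f (n + 2) rfl hf)
    rw [smul_extMk, P.extMk_eq_zero_iff _ _ _ _ n rfl] at h0
    exact ⟨s, hs, h0⟩
  · intro h x
    obtain ⟨f, hf, rfl⟩ := P.extMk_surjective x (n + 2) rfl
    obtain ⟨s, hs, h0⟩ := h f hf
    refine ⟨s, hs, ?_⟩
    rw [smul_extMk, P.extMk_eq_zero_iff _ _ _ _ n rfl]
    exact h0

lemma homology_tors (T : ShortComplex (ModuleCat.{u} A)) :
    (∀ x : T.homology, ∃ s ∈ S, s • x = 0) ↔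
      ∀ f : T.X₂, T.g f = 0 → ∃ s ∈ S, ∃ g, T.f g = s • f := by
  let e : T.homology ≃ₗ[A] (LinearMap.ker T.g.hom ⧸ LinearMap.range T.moduleCatToCycles) :=
    T.moduleCatHomologyIso.toLinearEquiv
  have key : (∀ x : T.homology, ∃ s ∈ S, s • x = 0) ↔
      (∀ x : (LinearMap.ker T.g.hom ⧸ LinearMap.range T.moduleCatToCycles), ∃ s ∈ S, s • x = 0) := by
    constructor
    · intro h x
      obtain ⟨s, hs, h0⟩ := h (e.symm x)
      refine ⟨s, hs, e.symm.injective ?_⟩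
      rw [map_smul, map_zero]
      exact h0
    · intro h x
      obtain ⟨s, hs, h0⟩ := h (e x)
      refine ⟨s, hs, e.injective ?_⟩
      rw [map_smul, map_zero]
      exact h0
  rw [key]
  constructor
  · intro h f hf
    obtain ⟨s, hs, h0⟩ := h (Submodule.Quotient.mk ⟨f, hf⟩)
    rw [← Submodule.Quotient.mk_smul, Submodule.Quotient.mk_eq_zero] at h0
    obtain ⟨g, hg⟩ := h0
    exact ⟨s, hs, g, congrArg Subtype.val hg⟩
  · intro h x
    obtain ⟨⟨f, hf⟩, rfl⟩ := Submodule.Quotient.mk_surjective _ x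
    obtain ⟨s, hs, g, hg⟩ := h f hf
    refine ⟨s, hs, ?_⟩
    rw [← Submodule.Quotient.mk_smul, Submodule.Quotient.mk_eq_zero]
    exact ⟨g, Subtype.ext hg⟩

lemma extM_tors_iff_res (P : ProjectiveResolution N) :
    (∀ x : ExtM A (n + 1) N M, ∃ s ∈ S, s • x = 0) ↔ ResTors S N M n P := by
  let e := (P.isoExt (R := A) (n + 1) M).toLinearEquiv
  let T := (P.complex.linearYonedaObj A M).sc' n (n + 1) (n + 2)
  let e' : ((P.complex.linearYonedaObj A M).homology (n + 1)) ≃ₗ[A] T.homology :=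
    (ShortComplex.homologyMapIso ((P.complex.linearYonedaObj A M).isoSc' n (n + 1) (n + 2)
      (by simp) (by simp))).toLinearEquiv
  let E := e.trans e'
  have key : (∀ x : ExtM A (n + 1) N M, ∃ s ∈ S, s • x = 0) ↔
      (∀ x : T.homology, ∃ s ∈ S, s • x = 0) := by
    constructor
    · intro h x
      obtain ⟨s, hs, h0⟩ := h (E.symm x)
      refine ⟨s, hs, E.symm.injective ?_⟩
      rw [map_smul, map_zero]
      exact h0
    · intro h x
      obtain ⟨s, hs, h0⟩ := h (E x)
      refine ⟨s, hs, E.injective ?_⟩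
      rw [map_smul, map_zero]
      exact h0
  rw [key, homology_tors]
  rfl

lemma extM_tors_iff :
    (∀ x : ExtM A (n + 1) N M, ∃ s ∈ S, s • x = 0) ↔ ExtTors S N M (n + 1) := by
  let P := projectiveResolution N
  rw [extM_tors_iff_res S N M n P, extTors_iff S N M n P]

lemma extTors_bot : ExtTors (⊥ : Submonoid A) N M n ↔ Subsingleton (Abelian.Ext.{u} N M n) := by
  constructor
  · intro h
    refine subsingleton_of_forall_eq 0 fun x => ?_
    obtain ⟨s, hs, h0⟩ := h x
    rw [Submonoid.mem_bot] at hs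
    simpa [hs] using h0
  · intro h x
    exact ⟨1, one_mem _, Subsingleton.elim _ _⟩

lemma extM_subsingleton_iff :
    Subsingleton (ExtM A (n + 1) N M) ↔ Subsingleton (Abelian.Ext.{u} N M (n + 1)) := by
  rw [← extTors_bot, ← extM_tors_iff]
  constructor
  · intro h x
    exact ⟨1, one_mem _, Subsingleton.elim _ _⟩
  · intro h
    refine subsingleton_of_forall_eq 0 fun x => ?_
    obtain ⟨s, hs, h0⟩ := h x
    rw [Submonoid.mem_bot] at hs
    simpa [hs] using h0

lemma injDimLE_iff : injDimLE A n M ↔ HasInjectiveDimensionLT M (n + 1) := by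
  constructor
  · intro h
    refine hasInjectiveDimensionLT_of_enoughProjectives.{u} M (n + 1) fun Y => ?_
    exact (extM_subsingleton_iff Y M n).1 (h (n + 1) (by lia) Y)
  · intro h i hi Y
    obtain ⟨j, rfl⟩ : ∃ j, i = j + 1 := ⟨i - 1, by lia⟩
    exact (extM_subsingleton_iff Y M j).2 (h.subsingleton M (n + 1) (j + 1) hi Y)

lemma nontrivial_loc_iff (E : Type u) [AddCommGroup E] [Module A E] :
    Nontrivial (LocalizedModule S E) ↔ ¬ ∀ x : E, ∃ s ∈ S, s • x = 0 := by
  rw [← not_subsingleton_iff_nontrivial, not_iff_not, LocalizedModule.subsingleton_iff]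

variable {T : ShortComplex (ModuleCat.{u} A)} (hT : T.ShortExact) [Projective T.X₂]
include hT

lemma tors_shift : ExtTors S T.X₃ M (n + 2) ↔ ExtTors S T.X₁ M (n + 1) := by
  constructor
  · intro h x
    obtain ⟨s, hs, h0⟩ := h (hT.extClass.comp x (by lia))
    refine ⟨s, hs, ?_⟩
    rw [← Ext.comp_smul] at h0
    obtain ⟨y, hy⟩ := Ext.contravariant_sequence_exact₁ hT M _ _ h0
    rw [← hy, Ext.eq_zero_of_projective y, Ext.comp_zero]
  · intro h x
    obtain ⟨y, rfl⟩ := Ext.contravariant_sequence_exact₃ hT M x (Ext.eq_zero_of_projective _)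
      (show 1 + (n + 1) = n + 2 by lia)
    obtain ⟨s, hs, h0⟩ := h y
    exact ⟨s, hs, by rw [← Ext.comp_smul, h0, Ext.comp_zero]⟩

lemma tors_one : ExtTors S T.X₃ M 1 ↔
    ∀ f : T.X₁ ⟶ M, ∃ s ∈ S, ∃ g : T.X₂ ⟶ M, T.f ≫ g = s • f := by
  constructor
  · intro h f
    obtain ⟨s, hs, h0⟩ := h (hT.extClass.comp (Ext.mk₀ f) (by lia))
    refine ⟨s, hs, ?_⟩
    rw [← Ext.comp_smul, ← Ext.mk₀_smul] at h0
    obtain ⟨y, hy⟩ := Ext.contravariant_sequence_exact₁ hT M _ _ h0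
    obtain ⟨g, rfl⟩ := (Ext.mk₀_bijective _ _).2 y
    rw [Ext.mk₀_comp_mk₀] at hy
    exact ⟨g, (Ext.mk₀_bijective _ _).1 hy⟩
  · intro h x
    obtain ⟨y, rfl⟩ := Ext.contravariant_sequence_exact₃ hT M x (Ext.eq_zero_of_projective _)
      (show 1 + 0 = 1 by lia)
    obtain ⟨f, rfl⟩ := (Ext.mk₀_bijective _ _).2 y
    obtain ⟨s, hs, g, hg⟩ := h f
    refine ⟨s, hs, ?_⟩
    rw [← Ext.comp_smul, ← Ext.mk₀_smul, ← hg, ← Ext.mk₀_comp_mk₀]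
    exact hT.extClass_comp_assoc _

end bridge

section baer
variable {A : Type u} [CommRing A]

lemma baer_dim (n : ℕ) (X : ModuleCat.{u} A)
    (h : ∀ J : Ideal A, Subsingleton (Abelian.Ext.{u} (ModuleCat.of A (A ⧸ J)) X (n + 1))) :
    HasInjectiveDimensionLT X (n + 1) := by
  induction n generalizing X with
  | zero =>
    rw [← injective_iff_hasInjectiveDimensionLT_one, ← Module.injective_iff_injective_object A X,
      ← Module.Baer.iff_injective]
    intro J f
    have hT := LinearMap.shortExact_shortComplexKer (f := J.mkQ) (Submodule.mkQ_surjective J)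
    have : Projective (J.mkQ.shortComplexKer).X₂ :=
      inferInstanceAs (Projective (ModuleCat.of A A))
    have h1 := (tors_one ⊥ X hT).1 ((extTors_bot _ _ _).2 (h J))
    have hk : LinearMap.ker J.mkQ = J := Submodule.ker_mkQ J
    obtain ⟨s, hs, g, hg⟩ := h1 (ModuleCat.ofHom (f ∘ₗ (LinearEquiv.ofEq _ _ hk).toLinearMap))
    rw [Submonoid.mem_bot] at hs
    subst hs
    refine ⟨g.hom, fun x hx => ?_⟩
    have := congrArg (fun q => q.hom ⟨x, hk.symm ▸ hx⟩) hg
    simp only [one_smul] at this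
    exact this
  | succ n ih =>
    obtain ⟨I, _, f, _⟩ := EnoughInjectives.presentation X
    have injf : Function.Injective f.hom := (ModuleCat.mono_iff_injective f).mp ‹_›
    let S : ShortComplex (ModuleCat.{u} A) :=
      ModuleCat.shortComplexOfCompEqZero _ _ f.hom.exact_map_mkQ_range.linearMap_comp_eq_zero
    have exactS : S.ShortExact := ModuleCat.shortComplex_shortExact S
      f.hom.exact_map_mkQ_range injf (Submodule.mkQ_surjective _)
    have : Injective S.X₂ := ‹Injective I›
    refine (exactS.hasInjectiveDimensionLT_X₃_iff n this).1 (ih S.X₃ fun J => ?_)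
    refine subsingleton_of_forall_eq 0 fun x => ?_
    obtain ⟨y, rfl⟩ := Ext.covariant_sequence_exact₃ _ exactS x rfl
      ((h J).elim _ _)
    rw [Ext.eq_zero_of_injective y, Ext.zero_comp]

end baer

section loc
variable {R : Type u} [CommRing R] (p : PrimeSpectrum R)

lemma loc_quot (J : Ideal (Localization.AtPrime p.asIdeal)) :
    ∃ I : Ideal R, Nonempty (ModuleCat.of (Localization.AtPrime p.asIdeal)
      (Localization.AtPrime p.asIdeal ⧸ J) ≅ locMod R p (ModuleCat.of R (R ⧸ I))) := by
  let S := p.asIdeal.primeCompl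
  let I : Ideal R := J.comap (algebraMap R _)
  let φ : Localization.AtPrime p.asIdeal →ₗ[Localization.AtPrime p.asIdeal]
      LocalizedModule S (R ⧸ I) :=
    LinearMap.toSpanSingleton _ _ (LocalizedModule.mk (Ideal.Quotient.mk I 1) 1)
  have hφ (r : R) (s : S) : φ (Localization.mk r s) = LocalizedModule.mk (Ideal.Quotient.mk I r) s := by
    simp only [φ, LinearMap.toSpanSingleton_apply, LocalizedModule.mk_smul_mk]
    rw [mul_one, map_one, Algebra.smul_def, mul_one]
    rfl
  have hsurj : Function.Surjective φ := by
    intro y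
    induction y using LocalizedModule.induction_on with
    | h m s =>
      obtain ⟨r, rfl⟩ := Ideal.Quotient.mk_surjective m
      exact ⟨_, hφ r s⟩
  have hker : LinearMap.ker φ = J := by
    ext a
    induction a using Localization.induction_on with
    | H y =>
    obtain ⟨r, s⟩ := y
    rw [LinearMap.mem_ker, hφ, ← LocalizedModule.zero_mk s, LocalizedModule.mk_eq]
    have hmk : Localization.mk r s ∈ J ↔ algebraMap R _ r ∈ J := by
      rw [Localization.mk_eq_mk']
      exact IsLocalization.mk'_mem_iff
    rw [hmk]
    constructor
    · rintro ⟨u, hu⟩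
      have h2 : ((u : R) * ((s : R) * r)) ∈ I := by
        rw [← Ideal.Quotient.eq_zero_iff_mem]
        simpa [Submonoid.smul_def, Algebra.smul_def] using hu
      have h3 : algebraMap R (Localization.AtPrime p.asIdeal) ((u : R) * ((s : R) * r)) ∈ J := h2
      rw [← mul_assoc, map_mul] at h3
      exact (Ideal.unit_mul_mem_iff_mem J
        (IsLocalization.map_units (Localization.AtPrime p.asIdeal) (u * s))).1 h3
    · intro h
      have : Ideal.Quotient.mk I r = 0 := Ideal.Quotient.eq_zero_iff_mem.2 h
      exact ⟨1, by rw [this]⟩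
  exact ⟨I, ⟨((Submodule.quotEquivOfEq _ _ hker.symm).trans
    (φ.quotKerEquivOfSurjective hsurj)).toModuleIso⟩⟩

lemma locmap_comp {S : Submonoid R} {X Y Z : Type u} [AddCommGroup X] [Module R X]
    [AddCommGroup Y] [Module R Y] [AddCommGroup Z] [Module R Z] (f : X →ₗ[R] Y) (g : Y →ₗ[R] Z) :
    LocalizedModule.map S (g ∘ₗ f) = LocalizedModule.map S g ∘ₗ LocalizedModule.map S f := by
  ext x
  induction x using LocalizedModule.induction_on with
  | h m s => simp [LocalizedModule.map_mk]

lemma ext_loc_iff [IsNoetherianRing R] {S : Submonoid R} {K P M : Type u} [AddCommGroup K]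
    [Module R K] [AddCommGroup P] [Module R P] [AddCommGroup M] [Module R M]
    [Module.Finite R K] [Module.Finite R P] (i : K →ₗ[R] P) :
    (∀ f : K →ₗ[R] M, ∃ s ∈ S, ∃ g : P →ₗ[R] M, g ∘ₗ i = s • f) ↔
    (∀ φ : LocalizedModule S K →ₗ[Localization S] LocalizedModule S M,
      ∃ γ : LocalizedModule S P →ₗ[Localization S] LocalizedModule S M,
        γ ∘ₗ LocalizedModule.map S i = φ) := by
  have : Module.FinitePresentation R K := Module.finitePresentation_of_finite R K
  have : Module.FinitePresentation R P := Module.finitePresentation_of_finite R P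
  constructor
  · intro h φ
    obtain ⟨⟨k, s⟩, hk⟩ := IsLocalizedModule.surj S
      (LocalizedModule.map S (M := K) (N := M)) φ
    obtain ⟨t, ht, g, hg⟩ := h k
    have h1 : LocalizedModule.map S g ∘ₗ LocalizedModule.map S i = (t * (s : R)) • φ := by
      rw [← locmap_comp, hg, map_smul, ← hk, mul_smul]
      rfl
    have hu := IsLocalization.map_units (Localization S) ((⟨t, ht⟩ : S) * s)
    obtain ⟨v, hv⟩ := hu.exists_left_inv
    refine ⟨v • LocalizedModule.map S g, ?_⟩
    rw [LinearMap.smul_comp, h1, ← algebraMap_smul (Localization S) (t * (s : R)) φ, smul_smul]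
    have hv' : v * algebraMap R (Localization S) (t * (s : R)) = 1 := hv
    rw [hv', one_smul]
  · intro h f
    obtain ⟨γ, hγ⟩ := h (LocalizedModule.map S f)
    obtain ⟨⟨g, s⟩, hg⟩ := IsLocalizedModule.surj S
      (LocalizedModule.map S (M := P) (N := M)) γ
    have h1 : LocalizedModule.map S (g ∘ₗ i) = LocalizedModule.map S ((s : R) • f) := by
      rw [locmap_comp, map_smul, ← hγ, ← hg]
      rfl
    obtain ⟨t, ht⟩ := IsLocalizedModule.exists_of_eq (S := S) h1
    refine ⟨t * s, (t * s).2, (t : R) • g, ?_⟩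
    rw [LinearMap.smul_comp, mul_smul]
    exact ht

/-- The localization of the standard short exact sequence. -/
noncomputable abbrev locSES {P N : Type u} [AddCommGroup P] [Module R P] [AddCommGroup N] [Module R N]
    (f : P →ₗ[R] N) : ShortComplex (ModuleCat.{u} (Localization.AtPrime p.asIdeal)) where
  X₁ := ModuleCat.of _ (LocalizedModule p.asIdeal.primeCompl (LinearMap.ker f))
  X₂ := ModuleCat.of _ (LocalizedModule p.asIdeal.primeCompl P)
  X₃ := ModuleCat.of _ (LocalizedModule p.asIdeal.primeCompl N)
  f := ModuleCat.ofHom (LocalizedModule.map p.asIdeal.primeCompl (LinearMap.ker f).subtype)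
  g := ModuleCat.ofHom (LocalizedModule.map p.asIdeal.primeCompl f)
  zero := by
    rw [← ModuleCat.ofHom_comp, ← locmap_comp, LinearMap.comp_ker_subtype, map_zero]
    rfl

lemma locSES_shortExact {P N : Type u} [AddCommGroup P] [Module R P] [AddCommGroup N] [Module R N]
    (f : P →ₗ[R] N) (hf : Function.Surjective f) : (locSES p f).ShortExact where
  exact := (ShortComplex.ShortExact.moduleCat_exact_iff_function_exact _).mpr
    (LocalizedModule.map_exact p.asIdeal.primeCompl (LinearMap.ker f).subtype f
      (LinearMap.exact_subtype_ker_map f))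
  mono_f := (ModuleCat.mono_iff_injective _).mpr
    (LocalizedModule.map_injective p.asIdeal.primeCompl _ (LinearMap.ker f).injective_subtype)
  epi_g := (ModuleCat.epi_iff_surjective _).mpr
    (LocalizedModule.map_surjective p.asIdeal.primeCompl _ hf)

lemma tors_loc [IsNoetherianRing R] (M : ModuleCat.{u} R) (n : ℕ) (N : ModuleCat.{u} R)
    [Module.Finite R N] :
    ExtTors p.asIdeal.primeCompl N M (n + 1) ↔
      ExtTors ⊥ (locMod R p N) (locMod R p M) (n + 1) := by
  induction n generalizing N with
  | zero =>
    obtain ⟨P, _, _, _, _, f, hf⟩ := Module.exists_finite_presentation R N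
    have hT := LinearMap.shortExact_shortComplexKer hf
    have : Projective f.shortComplexKer.X₂ := inferInstanceAs (Projective (ModuleCat.of R P))
    have hT' := locSES_shortExact p f hf
    have : Projective (locSES p f).X₂ := inferInstanceAs (Projective (ModuleCat.of
      (Localization p.asIdeal.primeCompl) (LocalizedModule p.asIdeal.primeCompl P)))
    refine (tors_one _ M hT).trans (Iff.trans ?_ (tors_one ⊥ (locMod R p M) hT').symm)
    have key := ext_loc_iff (S := p.asIdeal.primeCompl) (M := M) (LinearMap.ker f).subtype
    constructor
    · intro h φ
      obtain ⟨γ, hγ⟩ := key.1 (fun k => by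
        obtain ⟨s, hs, g, hg⟩ := h (ModuleCat.ofHom k)
        exact ⟨s, hs, g.hom, congrArg ModuleCat.Hom.hom hg⟩) φ.hom
      refine ⟨1, one_mem _, ModuleCat.ofHom γ, ?_⟩
      rw [one_smul]
      exact ModuleCat.hom_ext hγ
    · intro h k
      obtain ⟨s, hs, g, hg⟩ := key.2 (fun φ => by
        obtain ⟨s, hs, γ, hγ⟩ := h (ModuleCat.ofHom φ)
        rw [Submonoid.mem_bot] at hs
        rw [hs, one_smul] at hγ
        exact ⟨γ.hom, congrArg ModuleCat.Hom.hom hγ⟩) k.hom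
      exact ⟨s, hs, ModuleCat.ofHom g, ModuleCat.hom_ext hg⟩
  | succ n ih =>
    obtain ⟨P, _, _, _, _, f, hf⟩ := Module.exists_finite_presentation R N
    have hT := LinearMap.shortExact_shortComplexKer hf
    have : Projective f.shortComplexKer.X₂ := inferInstanceAs (Projective (ModuleCat.of R P))
    have hT' := locSES_shortExact p f hf
    have : Projective (locSES p f).X₂ := inferInstanceAs (Projective (ModuleCat.of
      (Localization p.asIdeal.primeCompl) (LocalizedModule p.asIdeal.primeCompl P)))
    refine (tors_shift _ M n hT).trans (Iff.trans ?_ (tors_shift ⊥ (locMod R p M) n hT').symm)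
    exact ih (ModuleCat.of R (LinearMap.ker f))

end loc
/-- `id_{R_p}(M_p) ≥ n` iff `Ext^n(N,M)_p ≠ 0` for some f.g. `N`. -/
theorem stmt13 (R : Type u) [CommRing R] [IsNoetherianRing R]
    (M : ModuleCat.{u} R) (n : ℕ) (hn : 0 < n) (p : PrimeSpectrum R) :
    (¬ injDimLE (Localization.AtPrime p.asIdeal) (n - 1) (locMod R p M)) ↔
      ∃ N : ModuleCat.{u} R, Module.Finite R N ∧
        Nontrivial (LocalizedModule p.asIdeal.primeCompl (ExtM R n N M)) := by
  obtain ⟨m, rfl⟩ : ∃ m, n = m + 1 := ⟨n - 1, by lia⟩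
  rw [Nat.add_sub_cancel, injDimLE_iff]
  have key (N : ModuleCat.{u} R) (hN : Module.Finite R N) :
      Nontrivial (LocalizedModule p.asIdeal.primeCompl (ExtM R (m + 1) N M)) ↔
        ¬ Subsingleton (Abelian.Ext.{u} (locMod R p N) (locMod R p M) (m + 1)) := by
    rw [nontrivial_loc_iff, extM_tors_iff, tors_loc, extTors_bot]
  constructor
  · intro h
    by_contra hc
    push Not at hc
    refine h (baer_dim m _ fun J => ?_)
    obtain ⟨I, ⟨e⟩⟩ := loc_quot p J
    have hfin : Module.Finite R (ModuleCat.of R (R ⧸ I)) :=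
      inferInstanceAs (Module.Finite R (R ⧸ I))
    have h1 : Subsingleton (Abelian.Ext.{u} (locMod R p (ModuleCat.of R (R ⧸ I)))
        (locMod R p M) (m + 1)) := by
      by_contra h2
      exact not_subsingleton_iff_nontrivial.2 ((key _ hfin).2 h2) (hc _ hfin)
    refine subsingleton_of_forall_eq 0 fun x => ?_
    rw [← Ext.mk₀_id_comp x, ← e.hom_inv_id, ← Ext.mk₀_comp_mk₀_assoc,
      Subsingleton.elim ((Ext.mk₀ e.inv).comp x (zero_add _)) 0, Ext.comp_zero]
  · rintro ⟨N, hN, hnt⟩ h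
    exact (key N hN).1 hnt (h.subsingleton _ (m + 1) (m + 1) le_rfl _)
end

section
/- Let R be a commutative Noetherian ring and M an R-module. Then the infinite injective dimension locus IID(M) = {p ∈ Spec(R) : id_{R_p}(M_p) = ∞} is contained in V(coca_R(M)). -/
open CategoryTheory

/-- `r` kills the homology of a cochain complex of modules iff `r` times any cocycle is a
coboundary. -/
lemma homology_smul_iff {R : Type u} [CommRing R] (K : CochainComplex (ModuleCat.{u} R) ℕ) (n : ℕ)
    (r : R) : (∀ x : K.homology (n+1), r • x = 0) ↔
      ∀ f : K.X (n+1), K.d (n+1) (n+2) f = 0 → ∃ g : K.X n, K.d n (n+1) g = r • f := by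
  let S := K.sc' n (n+1) (n+2)
  let e : K.homology (n+1) ≃ₗ[R] (LinearMap.ker S.g.hom ⧸ LinearMap.range S.moduleCatToCycles) :=
    ((K.homologyIsoSc' n (n+1) (n+2) (by simp) (by simp)) ≪≫
    S.moduleCatHomologyIso).toLinearEquiv
  constructor
  · intro h f hf
    have h1 : r • (Submodule.Quotient.mk ⟨f, hf⟩ :
        LinearMap.ker S.g.hom ⧸ LinearMap.range S.moduleCatToCycles) = 0 := by
      have h2 := congrArg e (h (e.symm (Submodule.Quotient.mk ⟨f, hf⟩)))
      rw [map_smul, map_zero] at h2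
      rwa [LinearEquiv.apply_symm_apply] at h2
    rw [← Submodule.Quotient.mk_smul, Submodule.Quotient.mk_eq_zero] at h1
    obtain ⟨g, hg⟩ := h1
    exact ⟨g, congrArg Subtype.val hg⟩
  · intro h x
    apply e.injective
    rw [map_smul, map_zero]
    obtain ⟨⟨f, hf⟩, hx⟩ := Submodule.Quotient.mk_surjective _ (e x)
    obtain ⟨g, hg⟩ := h f hf
    rw [← hx, ← Submodule.Quotient.mk_smul, Submodule.Quotient.mk_eq_zero]
    exact ⟨g, Subtype.ext hg⟩

lemma ExtM_smul_iff {R : Type u} [CommRing R] {N : ModuleCat.{u} R} (P : ProjectiveResolution N)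
    (M : ModuleCat.{u} R) (n : ℕ) (r : R) : (∀ x : ExtM R (n+1) N M, r • x = 0) ↔
      ∀ f : P.complex.X (n+1) ⟶ M, P.complex.d (n+2) (n+1) ≫ f = 0 →
        ∃ g : P.complex.X n ⟶ M, P.complex.d (n+1) n ≫ g = r • f := by
  let e := (P.isoExt (R := R) (n+1) M).toLinearEquiv
  refine Iff.trans ?_ (homology_smul_iff (P.complex.linearYonedaObj R M) n r)
  constructor
  · intro h x
    have := h (e.symm x)
    rwa [← map_smul, LinearEquiv.map_eq_zero_iff] at this
  · intro h x
    have := h (e x)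
    rwa [← map_smul, LinearEquiv.map_eq_zero_iff] at this

lemma Ext_smul_iff {R : Type u} [CommRing R] {N : ModuleCat.{u} R} (P : ProjectiveResolution N)
    (M : ModuleCat.{u} R) (n : ℕ) (r : R) : (∀ x : Abelian.Ext N M (n+1), r • x = 0) ↔
      ∀ f : P.complex.X (n+1) ⟶ M, P.complex.d (n+2) (n+1) ≫ f = 0 →
        ∃ g : P.complex.X n ⟶ M, P.complex.d (n+1) n ≫ g = r • f := by
  have key (f : P.complex.X (n+1) ⟶ M) (hf : P.complex.d (n+2) (n+1) ≫ f = 0) :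
      r • P.extMk f (n+2) rfl hf = 0 ↔
        ∃ g : P.complex.X n ⟶ M, P.complex.d (n+1) n ≫ g = r • f := by
    rw [Abelian.Ext.smul_eq_comp_mk₀, P.extMk_comp_mk₀, P.extMk_eq_zero_iff _ _ _ _ n rfl]
    simp
  constructor
  · intro h f hf
    exact (key f hf).1 (h _)
  · intro h x
    obtain ⟨f, hf, rfl⟩ := P.extMk_surjective x (n+2) rfl
    exact (key f hf).2 (h f hf)

lemma ExtM_smul_iff_Ext {R : Type u} [CommRing R] (N M : ModuleCat.{u} R) (n : ℕ) (r : R) :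
    (∀ x : ExtM R (n+1) N M, r • x = 0) ↔ (∀ x : Abelian.Ext N M (n+1), r • x = 0) :=
  (ExtM_smul_iff (projectiveResolution N) M n r).trans
    (Ext_smul_iff (projectiveResolution N) M n r).symm

lemma injDimLE_of {R : Type u} [CommRing R] (M : ModuleCat.{u} R) (n : ℕ)
    [HasInjectiveDimensionLE M n] : injDimLE R n M := by
  intro i hi N
  obtain ⟨k, rfl⟩ : ∃ k, i = k + 1 := ⟨i - 1, by omega⟩
  have h := (ExtM_smul_iff_Ext N M k 1).2 (fun x => by
    rw [x.eq_zero_of_hasInjectiveDimensionLT (n+1) (by omega), smul_zero])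
  exact ⟨fun a b => by rw [← one_smul R a, ← one_smul R b, h, h]⟩

open IsLocalizedModule Module in
theorem base_case {R : Type u} [CommRing R] (S : Submonoid R) [IsNoetherianRing R] 
    (M : ModuleCat.{u} R) (r : S)
    (h : ∀ N : ModuleCat.{u} R, Module.Finite R N → ∀ x : Abelian.Ext N M 1, r.1 • x = 0) :
    Module.Injective (Localization S) (M.localizedModule S) := by
  let Rₛ := Localization S
  let f := M.localizedModuleMkLinearMap S
  have MB (I : Ideal R) (g : I →ₗ[R] M) : ∃ g' : R →ₗ[R] M, g' ∘ₗ I.subtype = r.1 • g := by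
    let T : ShortComplex (ModuleCat.{u} R) :=
      ModuleCat.shortComplexOfCompEqZero _ _ (I.subtype.exact_map_mkQ_range).linearMap_comp_eq_zero
    have hT : T.ShortExact := ModuleCat.shortComplex_shortExact T
      I.subtype.exact_map_mkQ_range I.subtype_injective (Submodule.mkQ_surjective _)
    have h0 := h T.X₃ (Module.Finite.of_surjective _ (Submodule.mkQ_surjective I.subtype.range))
      (hT.extClass.comp (Abelian.Ext.mk₀ (ModuleCat.ofHom g)) (add_zero 1))
    rw [← Abelian.Ext.comp_smul, ← Abelian.Ext.mk₀_smul] at h0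
    obtain ⟨x, hx⟩ := Abelian.Ext.contravariant_sequence_exact₁ hT M _ (add_zero 1) h0
    obtain ⟨x, rfl⟩ := Abelian.Ext.homEquiv₀.symm.surjective x
    rw [Abelian.Ext.homEquiv₀_symm_apply, Abelian.Ext.mk₀_comp_mk₀] at hx
    have := Abelian.Ext.homEquiv₀.symm.injective hx
    exact ⟨x.hom, congrArg ModuleCat.Hom.hom this⟩
  simp only [← Baer.iff_injective, Module.Baer.iff_surjective] 
  intro Iₛ g
  obtain ⟨I, rfl⟩ : ∃ I, .localized' Rₛ S (Algebra.linearMap R Rₛ) I = Iₛ :=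
    ⟨Iₛ.comap (algebraMap R Rₛ), by simp [Ideal.localized'_eq_map, IsLocalization.map_under S]⟩
  have : FinitePresentation R I := finitePresentation_of_finite R I
  obtain ⟨⟨g', a⟩, e : a.1 • g = _⟩ := surj S (mapExtendScalars S (I.toLocalized' _ _ _) f Rₛ) g
  obtain ⟨g'', hg⟩ := MB I g'
  refine ⟨IsLocalization.mk' Rₛ 1 (r * a) • mapExtendScalars S (Algebra.linearMap _ _) f _ g'', ?_⟩
  apply ((Module.End.isUnit_iff _).mp ((IsLocalization.map_units Rₛ (r * a)).map
    (algebraMap _ (Module.End Rₛ _)))).1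
  simp_rw [algebraMap_end_apply, map_smul, ← mul_smul, algebraMap_smul, IsLocalization.mk'_spec']
  have e2 : (r.1 * a.1) • g = mapExtendScalars S (I.toLocalized' _ _ _) f Rₛ
      (g'' ∘ₗ I.subtype) := by
    rw [hg, mul_smul, e]
    exact ((mapExtendScalars S (I.toLocalized' _ _ _) f Rₛ).map_smul r.1 g').symm
  rw [Submonoid.coe_mul, e2]
  apply LinearMap.restrictScalars_injective R
  refine IsLocalizedModule.linearMap_ext S (I.toLocalized' Rₛ S (Algebra.linearMap R Rₛ)) f ?_
  ext
  simp [-Algebra.linearMap_apply]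
  exact IsLocalizedModule.map_apply S (Algebra.linearMap R (Localization S)) f g'' _

theorem main_ind {R : Type u} [CommRing R] (S : Submonoid R) [IsNoetherianRing R] 
    (r : S) (n : ℕ) (M : ModuleCat.{u} R) 
    (h : ∀ N : ModuleCat.{u} R, Module.Finite R N → ∀ x : Abelian.Ext N M (n+1), r.1 • x = 0) :
    HasInjectiveDimensionLE (M.localizedModule S) n := by
  induction n generalizing M with
  | zero =>
    have := base_case S M r h
    simp only [HasInjectiveDimensionLE, zero_add, ← injective_iff_hasInjectiveDimensionLT_one]
    rwa [← Module.injective_iff_injective_object]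
  | succ n ih =>
    have ei : EnoughInjectives (ModuleCat.{u} R) := inferInstance
    rcases ei.1 M with ⟨I, inj, f, monof⟩
    let T := ShortComplex.mk f (Limits.cokernel.π f) (Limits.cokernel.condition f)
    have hT : T.ShortExact := { exact := ShortComplex.exact_cokernel f }
    let TS := T.map (ModuleCat.localizedModuleFunctor S)
    have TS_exact : TS.ShortExact := hT.map_of_exact (ModuleCat.localizedModuleFunctor S)
    have : Injective T.X₂ := inj
    let _ : Injective TS.X₂ := (ModuleCat.localizedModuleFunctor.{u} S).injective_obj _
    refine (TS_exact.hasInjectiveDimensionLT_X₃_iff n ‹_›).mp (ih T.X₃ ?_)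
    intro N hN x
    have h0 := h N hN (x.comp hT.extClass rfl)
    rw [← Abelian.Ext.smul_comp] at h0
    obtain ⟨y, hy⟩ := Abelian.Ext.covariant_sequence_exact₃ N hT _ rfl h0
    rw [← hy, y.eq_zero_of_injective, Abelian.Ext.zero_comp]

/-- `IID(M) ⊆ V(coca_R(M))`. -/
theorem stmt14 (R : Type u) [CommRing R] [IsNoetherianRing R]
    (M : ModuleCat.{u} R) (p : PrimeSpectrum R)
    (hp : ∀ n : ℕ, ¬ injDimLE (Localization.AtPrime p.asIdeal) n (locMod R p M)) :
    coca R M ⊆ (p.asIdeal : Set R) := by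
  intro r hr
  by_contra hrp
  obtain ⟨n, hn⟩ := Set.mem_iUnion.1 hr
  have h1 := main_ind p.asIdeal.primeCompl ⟨r, hrp⟩ n M fun N hN =>
    (ExtM_smul_iff_Ext N M n r).1 (hn (n+1) (by omega) N hN)
  have h2 : HasInjectiveDimensionLE (locMod R p M) n :=
    (ModuleCat.hasInjectiveDimensionLE_iff_of_linearEquiv
      (Shrink.linearEquiv (Localization.AtPrime p.asIdeal) _) n).1 h1
  exact hp n (injDimLE_of _ n)
end

section
/- Let R be a commutative Noetherian ring. Assume mod(R) has a strong generator: there exist s,t ≥ 0 and a finitely generated module G such that every s-th syzygy of a finitely generated module lies in |G|_t. Then for every finitely generated R-module M, the infinite injective dimension locus IID(M) equals V(coca_R(M)); in particular IID(M) is Zariski closed in Spec(R). -/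
open CategoryTheory

section Helpers

universe v

open Abelian

variable {R : Type v} [CommRing R]

/-- `r` annihilates `Ext^n(X, M)`. -/
def KillsExt (r : R) (n : ℕ) (X M : ModuleCat.{v} R) : Prop :=
  ∀ e : Abelian.Ext X M n, r • e = 0

theorem kills_homology_iff (S : ShortComplex (ModuleCat.{v} R)) (r : R) :
    (∀ x : S.homology, r • x = 0) ↔
      ∀ y : S.X₂, S.g.hom y = 0 → ∃ z : S.X₁, S.f.hom z = r • y := by
  have e : S.homology ≃ₗ[R] (LinearMap.ker S.g.hom ⧸ LinearMap.range S.moduleCatToCycles) :=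
    S.moduleCatHomologyIso.toLinearEquiv
  have h1 : (∀ x : S.homology, r • x = 0) ↔
      ∀ x : (LinearMap.ker S.g.hom ⧸ LinearMap.range S.moduleCatToCycles), r • x = 0 := by
    constructor
    · intro h x
      obtain ⟨y, rfl⟩ := e.surjective x
      rw [← map_smul, h, map_zero]
    · intro h x
      apply e.injective
      rw [map_smul, h, map_zero]
  rw [h1]
  constructor
  · intro h y hy
    have := h (Submodule.Quotient.mk ⟨y, hy⟩)
    rw [← Submodule.Quotient.mk_smul, Submodule.Quotient.mk_eq_zero] at this
    obtain ⟨z, hz⟩ := this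
    exact ⟨z, congrArg Subtype.val hz⟩
  · intro h x
    obtain ⟨⟨y, hy⟩, rfl⟩ := Submodule.Quotient.mk_surjective _ x
    rw [← Submodule.Quotient.mk_smul, Submodule.Quotient.mk_eq_zero]
    obtain ⟨z, hz⟩ := h y hy
    exact ⟨z, Subtype.ext hz⟩

theorem kills_extM_iff_complex (r : R) (n : ℕ) (X M : ModuleCat.{v} R)
    (P : ProjectiveResolution X) :
    (∀ x : ExtM R (n+1) X M, r • x = 0) ↔
      ∀ f : P.complex.X (n+1) ⟶ M, P.complex.d (n+2) (n+1) ≫ f = 0 →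
        ∃ g : P.complex.X n ⟶ M, P.complex.d (n+1) n ≫ g = r • f := by
  have e : ExtM R (n+1) X M ≃ₗ[R]
      ((P.complex.linearYonedaObj R M).sc' n (n+1) (n+2)).homology :=
    (P.isoExt (R := R) (n+1) M ≪≫ (P.complex.linearYonedaObj R M).homologyIsoSc'
      n (n+1) (n+2) (by simp) (by simp)).toLinearEquiv
  have h1 : (∀ x : ExtM R (n+1) X M, r • x = 0) ↔
      ∀ x : ((P.complex.linearYonedaObj R M).sc' n (n+1) (n+2)).homology, r • x = 0 := by
    constructor
    · intro h x
      obtain ⟨y, rfl⟩ := e.surjective x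
      rw [← map_smul, h, map_zero]
    · intro h x
      apply e.injective
      rw [map_smul, h, map_zero]
  rw [h1, kills_homology_iff]
  rfl

theorem kills_ext_iff_complex (r : R) (n : ℕ) (X M : ModuleCat.{v} R)
    (P : ProjectiveResolution X) :
    KillsExt r (n+1) X M ↔
      ∀ f : P.complex.X (n+1) ⟶ M, P.complex.d (n+2) (n+1) ≫ f = 0 →
        ∃ g : P.complex.X n ⟶ M, P.complex.d (n+1) n ≫ g = r • f := by
  have key : ∀ (f : P.complex.X (n+1) ⟶ M) (hf : P.complex.d (n+2) (n+1) ≫ f = 0),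
      r • P.extMk f (n+2) rfl hf = P.extMk (r • f) (n+2) rfl (by simp [hf]) := by
    intro f hf
    rw [Abelian.Ext.smul_eq_comp_mk₀, P.extMk_comp_mk₀]
    congr 1
  constructor
  · intro h f hf
    have := h (P.extMk f (n+2) rfl hf)
    rw [key, P.extMk_eq_zero_iff _ _ _ _ n rfl] at this
    exact this
  · intro h e
    obtain ⟨f, hf, rfl⟩ := P.extMk_surjective e (n+2) rfl
    rw [key, P.extMk_eq_zero_iff _ _ _ _ n rfl]
    exact h f hf

theorem kills_shift_fst {S : ShortComplex (ModuleCat.{v} R)} (hS : S.ShortExact)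
    [Projective S.X₂] (r : R) (n : ℕ) (M : ModuleCat.{v} R)
    (h : KillsExt r n S.X₁ M) : KillsExt r (n+1) S.X₃ M := by
  intro e
  obtain ⟨y, rfl⟩ := precomp_extClass_surjective_of_projective_X₂ M hS n e
  change r • hS.extClass.comp y (add_comm 1 n) = 0
  rw [← Abelian.Ext.comp_smul, h y, Abelian.Ext.comp_zero]

theorem kills_shift_snd {S : ShortComplex (ModuleCat.{v} R)} (hS : S.ShortExact)
    [Injective S.X₂] (r : R) (n : ℕ) (X : ModuleCat.{v} R)
    (h : KillsExt r (n+2) X S.X₁) : KillsExt r (n+1) X S.X₃ := by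
  intro e
  obtain ⟨y, hy⟩ := Abelian.Ext.covariant_sequence_exact₃ X hS (r • e) (n₁ := n+2) rfl (by
    rw [Abelian.Ext.smul_comp]; exact h _)
  rw [← hy, Abelian.Ext.eq_zero_of_injective y, Abelian.Ext.zero_comp]

theorem kills_extension {S : ShortComplex (ModuleCat.{v} R)} (hS : S.ShortExact)
    (a b : R) (n : ℕ) (M : ModuleCat.{v} R)
    (h₁ : KillsExt a n S.X₁ M) (h₃ : KillsExt b n S.X₃ M) : KillsExt (a * b) n S.X₂ M := by
  intro e
  obtain ⟨y, hy⟩ := Abelian.Ext.contravariant_sequence_exact₂ hS M (a • e) (by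
    rw [Abelian.Ext.comp_smul]; exact h₁ _)
  rw [mul_comm, mul_smul, ← hy, ← Abelian.Ext.comp_smul, h₃ y, Abelian.Ext.comp_zero]

theorem kills_summand (r : R) (n : ℕ) (X Y M : ModuleCat.{v} R)
    (h : IsSummand R X Y) (hY : KillsExt r n Y M) : KillsExt r n X M := by
  obtain ⟨i, p, hip⟩ := h
  intro e
  have h1 : ModuleCat.ofHom i ≫ ModuleCat.ofHom p = 𝟙 X := by
    rw [← ModuleCat.ofHom_comp, hip]; rfl
  rw [← Abelian.Ext.mk₀_id_comp e, ← h1, ← Abelian.Ext.mk₀_comp_mk₀,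
    Abelian.Ext.comp_assoc (α := Abelian.Ext.mk₀ (ModuleCat.ofHom i))
      (β := Abelian.Ext.mk₀ (ModuleCat.ofHom p)) (γ := e) (a₂₃ := n) _ (by simp) (by simp),
    ← Abelian.Ext.comp_smul, hY _, Abelian.Ext.comp_zero]

theorem kills_pi (r : R) (n k : ℕ) (G M : ModuleCat.{v} R)
    (hG : KillsExt r n G M) : KillsExt r n (ModuleCat.of R (Fin k → G)) M := by
  intro e
  have h1 : ∑ j : Fin k, (ModuleCat.ofHom (LinearMap.proj j : (Fin k → G) →ₗ[R] G) ≫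
      ModuleCat.ofHom (LinearMap.single R (fun _ : Fin k => G) j)) =
        𝟙 (ModuleCat.of R (Fin k → G)) := by
    ext x j
    simp [ModuleCat.hom_sum, Finset.sum_apply, Pi.single_apply]
  rw [← Abelian.Ext.mk₀_id_comp e, ← h1, Abelian.Ext.mk₀_sum, Abelian.Ext.sum_comp,
    Finset.smul_sum]
  refine Finset.sum_eq_zero fun j _ => ?_
  rw [← Abelian.Ext.mk₀_comp_mk₀_assoc,
    ← Abelian.Ext.comp_smul, hG _, Abelian.Ext.comp_zero]

theorem kills_ball (r : R) (n : ℕ) (G M : ModuleCat.{v} R) (hG : KillsExt r n G M) (t : ℕ) :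
    ∀ Y ∈ ballN R G t, KillsExt (r ^ t) n Y M := by
  induction t with
  | zero =>
    intro Y hY e
    have hY : Subsingleton Y := hY
    rw [← Abelian.Ext.mk₀_id_comp e, (ModuleCat.isZero_of_subsingleton Y).eq_zero_of_src (𝟙 Y),
      Abelian.Ext.mk₀_zero, Abelian.Ext.zero_comp, smul_zero]
  | succ t ih =>
    rintro Y ⟨Y', Y₁, Y₂, f, g, hf, hg, hfg, h₁, k, h₂⟩
    have hex : Function.Exact f g := LinearMap.exact_iff.mpr hfg
    let S : ShortComplex (ModuleCat.{v} R) :=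
      ModuleCat.shortComplexOfCompEqZero f g hex.linearMap_comp_eq_zero
    have hS : S.ShortExact := ModuleCat.shortComplex_shortExact S hex hf hg
    have := kills_extension hS (r ^ t) r n M (ih _ h₁)
      (kills_summand r n Y₂ _ M h₂ (kills_pi r n k G M hG))
    rw [pow_succ]
    exact kills_summand _ n Y _ M ⟨LinearMap.inl R Y Y', LinearMap.fst R Y Y', rfl⟩ this

theorem isSyz_finite [IsNoetherianRing R] (s : ℕ) : ∀ N K : ModuleCat.{v} R,
    Module.Finite R N → IsSyz R s N K → Module.Finite R K := by
  induction s with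
  | zero =>
    rintro N K hN ⟨e⟩
    exact Module.Finite.equiv e.symm
  | succ s ih =>
    rintro N K hN ⟨L, P, hL, hP, _, f, hf, ⟨e⟩⟩
    exact Module.Finite.equiv e.symm

theorem kills_syz [IsNoetherianRing R] (r : R) (N M : ModuleCat.{v} R) (hN : Module.Finite R N)
    (s : ℕ) : ∀ n, (∀ K, IsSyz R s N K → KillsExt r n K M) → KillsExt r (n + s) N M := by
  induction s with
  | zero =>
    intro n h
    exact h N ⟨LinearEquiv.refl R N⟩
  | succ s ih =>
    intro n h
    have h2 : KillsExt r (n + 1 + s) N M := ih (n+1) (by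
      intro L hL
      have := isSyz_finite s N L hN hL
      obtain ⟨P, _, _, _, _, f, hf⟩ := Module.exists_finite_presentation R L
      have := kills_shift_fst (LinearMap.shortExact_shortComplexKer hf) r n M
        (h _ ⟨L, ModuleCat.of R P, hL, inferInstance, inferInstance, f, hf,
          ⟨LinearEquiv.refl R _⟩⟩)
      exact this)
    rwa [add_right_comm] at h2

theorem kills_up [IsNoetherianRing R] (r : R) (M : ModuleCat.{v} R) (n : ℕ)
    (h : ∀ N : ModuleCat.{v} R, Module.Finite R N → KillsExt r n N M) (i : ℕ) (hi : n ≤ i) :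
    ∀ N : ModuleCat.{v} R, Module.Finite R N → KillsExt r i N M := by
  induction i, hi using Nat.le_induction with
  | base => exact h
  | succ i hi ih =>
    intro L hL
    obtain ⟨P, _, _, _, _, f, hf⟩ := Module.exists_finite_presentation R L
    exact kills_shift_fst (LinearMap.shortExact_shortComplexKer hf) r i M (ih _ inferInstance)

theorem kills_extM_iff (r : R) (n : ℕ) (X M : ModuleCat.{v} R) :
    (∀ x : ExtM R (n+1) X M, r • x = 0) ↔ KillsExt r (n+1) X M := by
  rw [kills_extM_iff_complex r n X M (projectiveResolution X),
    kills_ext_iff_complex r n X M (projectiveResolution X)]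

theorem injDimLE_iff_s15 (n : ℕ) (M : ModuleCat.{v} R) :
    injDimLE R n M ↔ HasInjectiveDimensionLE M n := by
  rw [HasInjectiveDimensionLE, hasInjectiveDimensionLT_iff]
  constructor
  · intro h i hi Y e
    obtain ⟨i, rfl⟩ : ∃ j, i = j + 1 := ⟨i - 1, by lia⟩
    have := (kills_extM_iff (1 : R) i Y M).1
      (fun x => (h (i+1) (by lia) Y).elim _ _) e
    simpa using this
  · intro h i hi Y
    obtain ⟨i, rfl⟩ : ∃ j, i = j + 1 := ⟨i - 1, by lia⟩
    have := (kills_extM_iff (1 : R) i Y M).2 (fun e => by rw [h (i+1) (by lia) e, smul_zero])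
    refine ⟨fun a b => ?_⟩
    have ha := this a
    have hb := this b
    rw [one_smul] at ha hb
    rw [ha, hb]

theorem extends_of_kills {S : ShortComplex (ModuleCat.{v} R)} (hS : S.ShortExact)
    (r : R) (M : ModuleCat.{v} R) (h : KillsExt r 1 S.X₃ M) (f : S.X₁ ⟶ M) :
    ∃ g : S.X₂ ⟶ M, S.f ≫ g = r • f := by
  obtain ⟨y, hy⟩ := Abelian.Ext.contravariant_sequence_exact₁ hS M (Abelian.Ext.mk₀ (r • f))
    (n₁ := 1) rfl (by rw [Abelian.Ext.mk₀_smul, Abelian.Ext.comp_smul]; exact h _)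
  obtain ⟨g, rfl⟩ := Abelian.Ext.homEquiv₀.symm.surjective y
  exact ⟨g, Abelian.Ext.homEquiv₀.symm.injective (by simpa using hy)⟩

theorem torsion_of_extends {S : ShortComplex (ModuleCat.{v} R)} (hS : S.ShortExact)
    [Projective S.X₂] (T : Submonoid R) (M : ModuleCat.{v} R)
    (h : ∀ f : S.X₁ ⟶ M, ∃ r ∈ T, ∃ g : S.X₂ ⟶ M, S.f ≫ g = r • f)
    (e : Abelian.Ext S.X₃ M 1) : ∃ r ∈ T, r • e = 0 := by
  obtain ⟨y, rfl⟩ := precomp_extClass_surjective_of_projective_X₂ M hS 0 e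
  obtain ⟨f, rfl⟩ := Abelian.Ext.homEquiv₀.symm.surjective y
  obtain ⟨r, hr, g, hg⟩ := h f
  refine ⟨r, hr, ?_⟩
  change r • hS.extClass.comp (Abelian.Ext.mk₀ f) (add_comm 1 0) = 0
  rw [← Abelian.Ext.comp_smul, ← Abelian.Ext.mk₀_smul, ← hg, ← Abelian.Ext.mk₀_comp_mk₀]
  exact hS.extClass_comp_assoc _

theorem extends_of_localized_injective [IsNoetherianRing R] (T : Submonoid R)
    (K P C : Type v) [AddCommGroup K] [AddCommGroup P] [AddCommGroup C]
    [Module R K] [Module R P] [Module R C] [Module.Finite R K] [Module.Finite R P]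
    (ι : K →ₗ[R] P) (hι : Function.Injective ι)
    {C' : Type v} [AddCommGroup C'] [Module R C'] [Module (Localization T) C']
    [IsScalarTower R (Localization T) C'] (φ : C →ₗ[R] C') [IsLocalizedModule T φ]
    [Module.Injective (Localization T) C'] (f : K →ₗ[R] C) :
    ∃ r ∈ T, ∃ g : P →ₗ[R] C, g ∘ₗ ι = r • f := by
  have : Module.FinitePresentation R K := Module.finitePresentation_of_finite R K
  have : Module.FinitePresentation R P := Module.finitePresentation_of_finite R P
  let k := LocalizedModule.mkLinearMap T K
  let p := LocalizedModule.mkLinearMap T P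
  let ι' := IsLocalizedModule.mapExtendScalars T k p (Localization T) ι
  have hι' : Function.Injective ι' := IsLocalizedModule.map_injective T k p ι hι
  let F := IsLocalizedModule.mapExtendScalars T k φ (Localization T) f
  obtain ⟨H, hH⟩ := Module.Injective.out ι' hι' F
  obtain ⟨⟨g, a⟩, hg : a.1 • H = _⟩ :=
    IsLocalizedModule.surj T (IsLocalizedModule.mapExtendScalars T p φ (Localization T)) H
  have key : IsLocalizedModule.mapExtendScalars T k φ (Localization T) (g ∘ₗ ι) =
      IsLocalizedModule.mapExtendScalars T k φ (Localization T) (a.1 • f) := by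
    apply LinearMap.restrictScalars_injective R
    refine IsLocalizedModule.linearMap_ext T k φ ?_
    ext x
    have h1 := LinearMap.congr_fun hg (p (ι x))
    have h2 := hH (k x)
    simp [ι', F] at h1 h2 ⊢
    rw [← h1, h2]
  obtain ⟨c, hc⟩ := (IsLocalizedModule.eq_iff_exists T _).mp key
  refine ⟨c.1 * a.1, mul_mem c.2 a.2, c.1 • g, ?_⟩
  rw [mul_smul, LinearMap.smul_comp]
  exact hc

theorem injective_localized_of_kills [IsNoetherianRing R] (T : Submonoid R) (r : R) (hr : r ∈ T)
    (C : ModuleCat.{v} R)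
    (h : ∀ X : ModuleCat.{v} R, Module.Finite R X → KillsExt r 1 X C)
    {C' : Type v} [AddCommGroup C'] [Module R C'] [Module (Localization T) C']
    [IsScalarTower R (Localization T) C'] (φ : C →ₗ[R] C') [IsLocalizedModule T φ] :
    Module.Injective (Localization T) C' := by
  rw [← Module.Baer.iff_injective, Module.Baer.iff_surjective]
  intro Iₛ g
  obtain ⟨I, rfl⟩ : ∃ I, Submodule.localized' (Localization T) T
      (Algebra.linearMap R (Localization T)) I = Iₛ :=
    ⟨Iₛ.comap (algebraMap R (Localization T)), by
      simp [Ideal.localized'_eq_map, IsLocalization.map_under T]⟩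
  have : Module.FinitePresentation R I := Module.finitePresentation_of_finite R I
  obtain ⟨⟨g', a⟩, e : a.1 • g = _⟩ := IsLocalizedModule.surj T
    (IsLocalizedModule.mapExtendScalars T (I.toLocalized' (Localization T) T
      (Algebra.linearMap R (Localization T))) φ (Localization T)) g
  have hex : Function.Exact I.subtype I.mkQ := LinearMap.exact_subtype_mkQ I
  let S : ShortComplex (ModuleCat.{v} R) :=
    ModuleCat.shortComplexOfCompEqZero I.subtype I.mkQ hex.linearMap_comp_eq_zero
  have hS : S.ShortExact := ModuleCat.shortComplex_shortExact S hex
    I.injective_subtype I.mkQ_surjective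
  obtain ⟨G, hG⟩ := extends_of_kills hS r C
    (h _ (inferInstanceAs (Module.Finite R (R ⧸ I)))) (ModuleCat.ofHom g')
  have hG' : ∀ x : I, G.hom (x : R) = r • g' x := fun x =>
    LinearMap.congr_fun (congrArg ModuleCat.Hom.hom hG) x
  let G' : R →ₗ[R] C := G.hom
  refine ⟨IsLocalization.mk' (Localization T) 1 (a * ⟨r, hr⟩) •
    IsLocalizedModule.mapExtendScalars T (Algebra.linearMap _ _) φ _ G', ?_⟩
  apply ((Module.End.isUnit_iff _).mp ((IsLocalization.map_units (Localization T)
    (a * ⟨r, hr⟩)).map (algebraMap _ (Module.End (Localization T) _)))).1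
  simp_rw [Module.algebraMap_end_apply, map_smul, ← mul_smul, algebraMap_smul,
    IsLocalization.mk'_spec']
  rw [show ((a * ⟨r, hr⟩ : T) : R) = r * a.1 by simp [mul_comm], mul_smul, e]
  apply LinearMap.restrictScalars_injective R
  refine IsLocalizedModule.linearMap_ext T (I.toLocalized' (Localization T) T
    (Algebra.linearMap R (Localization T))) φ ?_
  ext x
  have := hG' x
  simp [-Algebra.linearMap_apply, G', this]

theorem exists_cosyzygy (M : ModuleCat.{v} R) : ∃ S : ShortComplex (ModuleCat.{v} R),
    S.ShortExact ∧ Injective S.X₂ ∧ S.X₁ = M := by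
  have ei : EnoughInjectives (ModuleCat.{v} R) := inferInstance
  rcases ei.1 M with ⟨I, inj, f, monof⟩
  exact ⟨ShortComplex.mk f (Limits.cokernel.π f) (Limits.cokernel.condition f),
    { exact := ShortComplex.exact_cokernel f }, inj, rfl⟩

theorem localized_injDim_of_kills [IsNoetherianRing R] (T : Submonoid R) (r : R) (hr : r ∈ T)
    (n : ℕ) : ∀ M : ModuleCat.{v} R,
    (∀ X : ModuleCat.{v} R, Module.Finite R X → KillsExt r (n+1) X M) →
    HasInjectiveDimensionLE (M.localizedModule T) n := by
  induction n with
  | zero =>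
    intro M h
    simp only [HasInjectiveDimensionLE, zero_add, ← injective_iff_hasInjectiveDimensionLT_one]
    rw [← Module.injective_iff_injective_object]
    exact injective_localized_of_kills T r hr M h (M.localizedModuleMkLinearMap T)
  | succ n ih =>
    intro M h
    obtain ⟨S, hS, inj, rfl⟩ := exists_cosyzygy M
    have h3 := ih S.X₃ fun X hX => kills_shift_snd hS r n X (h X hX)
    have hT := hS.map_of_exact (ModuleCat.localizedModuleFunctor T)
    have injT : Injective (S.map (ModuleCat.localizedModuleFunctor T)).X₂ :=
      (ModuleCat.localizedModuleFunctor.{v} T).injective_obj _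
    exact (hT.hasInjectiveDimensionLT_X₃_iff n injT).mp h3

theorem torsion_of_localized_injDim [IsNoetherianRing R] (T : Submonoid R) (X : ModuleCat.{v} R)
    (hX : Module.Finite R X) (n : ℕ) : ∀ M : ModuleCat.{v} R,
    HasInjectiveDimensionLE (M.localizedModule T) n →
    ∀ e : Abelian.Ext X M (n+1), ∃ r ∈ T, r • e = 0 := by
  induction n with
  | zero =>
    intro M h
    simp only [HasInjectiveDimensionLE, zero_add,
      ← injective_iff_hasInjectiveDimensionLT_one] at h
    rw [← Module.injective_iff_injective_object] at h
    obtain ⟨P, _, _, _, _, f, hf⟩ := Module.exists_finite_presentation R X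
    refine torsion_of_extends (LinearMap.shortExact_shortComplexKer hf) T M ?_
    intro g
    obtain ⟨r, hr, g', hg'⟩ := extends_of_localized_injective T (LinearMap.ker f) P M
      (LinearMap.ker f).subtype (LinearMap.ker f).injective_subtype
      (M.localizedModuleMkLinearMap T) g.hom
    exact ⟨r, hr, ModuleCat.ofHom g', ModuleCat.hom_ext hg'⟩
  | succ n ih =>
    intro M h e
    obtain ⟨S, hS, inj, rfl⟩ := exists_cosyzygy M
    have hT := hS.map_of_exact (ModuleCat.localizedModuleFunctor T)
    have injT : Injective (S.map (ModuleCat.localizedModuleFunctor T)).X₂ :=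
      (ModuleCat.localizedModuleFunctor.{v} T).injective_obj _
    have h3 := (hT.hasInjectiveDimensionLT_X₃_iff n injT).mpr h
    obtain ⟨y, rfl⟩ := Abelian.Ext.covariant_sequence_exact₁ X hS e
      (Abelian.Ext.eq_zero_of_injective _) rfl
    obtain ⟨r, hr, hy⟩ := ih S.X₃ h3 y
    exact ⟨r, hr, by rw [← Abelian.Ext.smul_comp, hy, Abelian.Ext.zero_comp]⟩

theorem uniform_torsion (T : Submonoid R) (E : Type v) [AddCommGroup E] [Module R E]
    [Module.Finite R E] (h : ∀ e : E, ∃ r ∈ T, r • e = 0) : ∃ r ∈ T, ∀ e : E, r • e = 0 := by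
  obtain ⟨s, hs⟩ := Module.Finite.fg_top (R := R) (M := E)
  choose f hf hfe using h
  refine ⟨∏ e ∈ s, f e, prod_mem fun e _ => hf e, ?_⟩
  intro e
  have he : e ∈ Submodule.span R (s : Set E) := by rw [hs]; trivial
  induction he using Submodule.span_induction with
  | mem x hx =>
    obtain ⟨c, hc⟩ := Finset.dvd_prod_of_mem f hx
    rw [hc, mul_comm, mul_smul, hfe, smul_zero]
  | zero => exact smul_zero _
  | add x y _ _ hx hy => rw [smul_add, hx, hy, add_zero]
  | smul a x _ hx => rw [smul_comm, hx, smul_zero]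

theorem locMod_injDim_iff (p : PrimeSpectrum R) (M : ModuleCat.{v} R) (n : ℕ) :
    injDimLE (Localization.AtPrime p.asIdeal) n (locMod R p M) ↔
      HasInjectiveDimensionLE (M.localizedModule p.asIdeal.primeCompl) n := by
  rw [injDimLE_iff_s15]
  exact ModuleCat.hasInjectiveDimensionLE_iff_of_linearEquiv
    (LinearEquiv.extendScalarsOfIsLocalization p.asIdeal.primeCompl
        (Localization.AtPrime p.asIdeal) (IsLocalizedModule.linearEquiv p.asIdeal.primeCompl
        (LocalizedModule.mkLinearMap p.asIdeal.primeCompl M)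
        (M.localizedModuleMkLinearMap p.asIdeal.primeCompl))) n

end Helpers

/-- if `mod R` has a strong generator then `IID(M) = V(coca_R(M))`,
and in particular `IID(M)` is closed. -/
theorem stmt15 (R : Type u) [CommRing R] [IsNoetherianRing R]
    (G : ModuleCat.{u} R) (hG : Module.Finite R G) (s t : ℕ)
    (hgen : ∀ M : ModuleCat.{u} R, Module.Finite R M →
      ∀ K : ModuleCat.{u} R, IsSyz R s M K → K ∈ ballN R G t)
    (M : ModuleCat.{u} R) [Module.Finite R M] :
    {p : PrimeSpectrum R |
        ∀ n : ℕ, ¬ injDimLE (Localization.AtPrime p.asIdeal) n (locMod R p M)} =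
      {p : PrimeSpectrum R | coca R M ⊆ (p.asIdeal : Set R)} ∧
    IsClosed {p : PrimeSpectrum R |
        ∀ n : ℕ, ¬ injDimLE (Localization.AtPrime p.asIdeal) n (locMod R p M)} := by
  have main : {p : PrimeSpectrum R |
        ∀ n : ℕ, ¬ injDimLE (Localization.AtPrime p.asIdeal) n (locMod R p M)} =
      {p : PrimeSpectrum R | coca R M ⊆ (p.asIdeal : Set R)} := by
    ext p
    simp only [Set.mem_ofPred_eq]
    constructor
    · intro h r hr
      by_contra hrp
      obtain ⟨n, hn⟩ := Set.mem_iUnion.1 hr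
      have hn : ∀ i, n ≤ i → ∀ N : ModuleCat.{u} R, Module.Finite R N →
        ∀ x : ExtM R i N M, r • x = 0 := hn
      refine h n ((locMod_injDim_iff p M n).2
        (localized_injDim_of_kills p.asIdeal.primeCompl r hrp n M fun X hX => ?_))
      exact (kills_extM_iff r n X M).1 (hn (n+1) (by lia) X hX)
    · intro h n hn
      rw [locMod_injDim_iff] at hn
      obtain ⟨r, hr, hrk⟩ := uniform_torsion p.asIdeal.primeCompl (Abelian.Ext G M (n+1))
        (torsion_of_localized_injDim p.asIdeal.primeCompl G hG n M hn)
      have h1 : ∀ N : ModuleCat.{u} R, Module.Finite R N → KillsExt (r ^ t) (n + 1 + s) N M :=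
        fun N hN => kills_syz (r ^ t) N M hN s (n+1) fun K hK =>
          kills_ball r (n+1) G M hrk t K (hgen N hN K hK)
      have h2 : r ^ t ∈ coca R M := by
        refine Set.mem_iUnion.2 ⟨n + 1 + s, ?_⟩
        intro i hi N hN
        obtain ⟨j, rfl⟩ : ∃ j, i = j + 1 := ⟨i - 1, by lia⟩
        exact (kills_extM_iff (r ^ t) j N M).2 (kills_up (r ^ t) M (n + 1 + s) h1 (j+1) hi N hN)
      exact (p.asIdeal.primeCompl.pow_mem hr t) (h h2)
  refine ⟨main, ?_⟩
  rw [main]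
  exact PrimeSpectrum.isClosed_zeroLocus (coca R M)
end

section
/- Let R be a Gorenstein ring of finite Krull dimension d and let M be a maximal Cohen–Macaulay R-module. Then coca_R^{d+1}(M) = coca_R(M) = ann_R End̲_R(M) = ca_R(M), where End̲_R(M) is the stable endomorphism ring (endomorphisms modulo those factoring through a projective). -/
open CategoryTheory

namespace CocaProof

universe u

variable {R : Type u} [CommRing R]

/-- `r` annihilates `Ext^i(L, N)`. -/
def Kill (r : R) (i : ℕ) (L N : ModuleCat.{u} R) : Prop := ∀ x : ExtM R i L N, r • x = 0

lemma kill_iso_aux {A B : ModuleCat.{u} R} (e : A ≅ B) (r : R) :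
    (∀ x : A, r • x = 0) ↔ (∀ x : B, r • x = 0) := by
  let e' := e.toLinearEquiv
  constructor
  · intro h x
    apply e'.symm.injective
    rw [map_smul, h, map_zero]
  · intro h x
    apply e'.injective
    rw [map_smul, h, map_zero]

lemma kill_homology_aux (S : ShortComplex (ModuleCat.{u} R)) (r : R) :
    (∀ x : S.homology, r • x = 0) ↔
      ∀ x : S.X₂, S.g.hom x = 0 → ∃ y : S.X₁, S.f.hom y = r • x := by
  rw [kill_iso_aux S.moduleCatHomologyIso r]
  constructor
  · intro h x hx
    have h1 := h (Submodule.Quotient.mk (⟨x, hx⟩ : LinearMap.ker S.g.hom))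
    change Submodule.Quotient.mk (r • (⟨x, hx⟩ : LinearMap.ker S.g.hom)) = (0 :
      LinearMap.ker S.g.hom ⧸ LinearMap.range S.moduleCatToCycles) at h1
    rw [Submodule.Quotient.mk_eq_zero] at h1
    obtain ⟨y, hy⟩ := h1
    exact ⟨y, congrArg Subtype.val hy⟩
  · intro h x
    change LinearMap.ker S.g.hom ⧸ LinearMap.range S.moduleCatToCycles at x
    obtain ⟨⟨x, hx⟩, rfl⟩ := Submodule.Quotient.mk_surjective _ x
    change Submodule.Quotient.mk (r • (⟨x, hx⟩ : LinearMap.ker S.g.hom)) = (0 :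
      LinearMap.ker S.g.hom ⧸ LinearMap.range S.moduleCatToCycles)
    rw [Submodule.Quotient.mk_eq_zero]
    obtain ⟨y, hy⟩ := h x hx
    exact ⟨y, Subtype.ext hy⟩

lemma kill_iff_resolution {L : ModuleCat.{u} R} (P : ProjectiveResolution L) (r : R) (i : ℕ)
    (N : ModuleCat.{u} R) :
    Kill r (i + 1) L N ↔ ∀ f : P.complex.X (i + 1) ⟶ N, P.complex.d (i + 2) (i + 1) ≫ f = 0 →
      ∃ g : P.complex.X i ⟶ N, P.complex.d (i + 1) i ≫ g = r • f := by
  unfold Kill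
  rw [kill_iso_aux (P.isoExt (i + 1) N) r]
  rw [kill_iso_aux ((P.complex.linearYonedaObj R N).homologyIsoSc' i (i+1) (i+2)
    (by simp) (by simp)) r]
  rw [kill_homology_aux]
  exact Iff.rfl

/-- A (not nec. finite) projective resolution presented by its syzygies. -/
structure Chain (R : Type u) [CommRing R] where
  K : ℕ → ModuleCat.{u} R
  P : ℕ → ModuleCat.{u} R
  proj : ∀ n, Module.Projective R (P n)
  π : ∀ n, P n →ₗ[R] K n
  ι : ∀ n, K (n + 1) →ₗ[R] P n
  surj : ∀ n, Function.Surjective (π n)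
  inj : ∀ n, Function.Injective (ι n)
  exact : ∀ n, Function.Exact (ι n) (π n)

namespace Chain

variable (S : Chain R)

/-- differential -/
def d (n : ℕ) : S.P (n + 1) ⟶ S.P n := ModuleCat.ofHom ((S.ι n).comp (S.π (n + 1)))

lemma d_apply (n : ℕ) (x : S.P (n + 1)) : (S.d n).hom x = S.ι n (S.π (n + 1) x) := rfl

lemma d_comp (n : ℕ) : S.d (n + 1) ≫ S.d n = 0 := by
  ext x
  change S.ι n (S.π (n + 1) (S.ι (n + 1) (S.π (n + 2) x))) = 0
  rw [(S.exact (n + 1)).apply_apply_eq_zero, map_zero]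

/-- the complex -/
noncomputable def cx : ChainComplex (ModuleCat.{u} R) ℕ := ChainComplex.of S.P S.d S.d_comp

lemma cx_d (n : ℕ) : S.cx.d (n + 1) n = S.d n := ChainComplex.of_d _ _ _

lemma exact_d (n : ℕ) : (ShortComplex.mk (S.d (n + 1)) (S.d n) (S.d_comp n)).Exact := by
  rw [ShortComplex.moduleCat_exact_iff]
  intro x hx
  change S.ι n (S.π (n + 1) x) = 0 at hx
  rw [map_eq_zero_iff _ (S.inj n)] at hx
  obtain ⟨y, rfl⟩ := (S.exact (n + 1) x).1 hx
  obtain ⟨z, rfl⟩ := S.surj (n + 2) y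
  exact ⟨z, rfl⟩

lemma d_pi : S.d 0 ≫ ModuleCat.ofHom (S.π 0) = 0 := by
  ext x
  exact (S.exact 0).apply_apply_eq_zero _

lemma exact_zero : (ShortComplex.mk (S.d 0) (ModuleCat.ofHom (S.π 0)) S.d_pi).Exact := by
  rw [ShortComplex.moduleCat_exact_iff]
  intro x hx
  obtain ⟨y, rfl⟩ := (S.exact 0 x).1 hx
  obtain ⟨z, rfl⟩ := S.surj 1 y
  exact ⟨z, rfl⟩

lemma cx_exactAt (n : ℕ) : S.cx.ExactAt (n + 1) := by
  rw [HomologicalComplex.exactAt_iff' _ (n + 1 + 1) (n + 1) n (by simp) (by simp)]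
  have := S.exact_d n
  simp only [← cx_d] at this
  exact this

/-- augmentation -/
noncomputable def aug : S.cx ⟶ (ChainComplex.single₀ _).obj (S.K 0) :=
  (ChainComplex.toSingle₀Equiv S.cx (S.K 0)).symm ⟨ModuleCat.ofHom (S.π 0), by
    rw [cx_d]; exact S.d_pi⟩

lemma aug_f : S.aug.f 0 = ModuleCat.ofHom (S.π 0) :=
  ChainComplex.toSingle₀Equiv_symm_apply_f_zero _ _

/-- the resolution -/
noncomputable def res : ProjectiveResolution (S.K 0) where
  complex := S.cx
  projective n := by
    have := S.proj n
    exact (IsProjective.iff_projective (S.P n)).1 this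
  π := S.aug
  quasiIso := ⟨fun n => by
    cases n
    · rw [ChainComplex.quasiIsoAt₀_iff, ShortComplex.quasiIso_iff_of_zeros']
      · refine (ShortComplex.exact_and_epi_g_iff_of_iso ?_).2
          ⟨S.exact_zero, (ModuleCat.epi_iff_surjective _).2 (S.surj 0)⟩
        exact ShortComplex.isoMk (Iso.refl _) (Iso.refl _) (Iso.refl _)
          (by simp [cx_d]; rfl) ((Category.id_comp _).trans
            (S.aug_f.symm.trans (Category.comp_id (S.aug.f 0)).symm))
      all_goals rfl
    · rw [quasiIsoAt_iff_exactAt']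
      · apply cx_exactAt
      · apply ChainComplex.exactAt_succ_single_obj⟩

lemma kill_iff (r : R) (i : ℕ) (N : ModuleCat.{u} R) :
    Kill r (i + 1) (S.K 0) N ↔ ∀ f : S.K (i + 1) →ₗ[R] N, ∃ g : S.P i →ₗ[R] N,
      g.comp (S.ι i) = r • f := by
  rw [kill_iff_resolution S.res]
  change (∀ f : S.P (i + 1) ⟶ N, S.cx.d (i + 2) (i + 1) ≫ f = 0 →
      ∃ g : S.P i ⟶ N, S.cx.d (i + 1) i ≫ g = r • f) ↔ _
  rw [cx_d, cx_d]
  constructor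
  · intro h f
    obtain ⟨g, hg⟩ := h (ModuleCat.ofHom (f.comp (S.π (i + 1)))) (by
      ext x
      change f (S.π (i + 1) (S.ι (i + 1) (S.π (i + 2) x))) = 0
      rw [(S.exact (i + 1)).apply_apply_eq_zero, map_zero])
    refine ⟨g.hom, ?_⟩
    ext x
    obtain ⟨y, rfl⟩ := S.surj (i + 1) x
    exact congrArg (fun k => k.hom y) hg
  · intro h f hf
    have hf' : LinearMap.ker (S.π (i + 1)) ≤ LinearMap.ker f.hom := by
      intro x hx
      obtain ⟨y, rfl⟩ := (S.exact (i + 1) x).1 hx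
      obtain ⟨z, rfl⟩ := S.surj (i + 2) y
      exact congrArg (fun k => k.hom z) hf
    let e := (S.π (i + 1)).quotKerEquivOfSurjective (S.surj (i + 1))
    obtain ⟨g, hg⟩ := h (((LinearMap.ker (S.π (i + 1))).liftQ f.hom hf').comp e.symm.toLinearMap)
    refine ⟨ModuleCat.ofHom g, ?_⟩
    ext x
    have h1 := congrArg (fun k => k (S.π (i + 1) x)) hg
    refine h1.trans ?_
    have : ∀ y : S.P (i + 1), e.symm (S.π (i + 1) y) = Submodule.Quotient.mk y := fun y => by
      rw [LinearEquiv.symm_apply_eq]; rfl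
    change r • ((LinearMap.ker (S.π (i + 1))).liftQ f.hom hf') (e.symm (S.π (i + 1) x)) = _
    exact congrArg (fun t => r • ((LinearMap.ker (S.π (i + 1))).liftQ f.hom hf') t) (this x)

/-- prepend a step -/
def cons {L P : ModuleCat.{u} R} (hP : Module.Projective R P) (ι : S.K 0 →ₗ[R] P)
    (π : P →ₗ[R] L) (hι : Function.Injective ι) (hπ : Function.Surjective π)
    (h : Function.Exact ι π) : Chain R where
  K n := Nat.casesOn n L S.K
  P n := Nat.casesOn n P S.P
  proj n := by cases n; exacts [hP, S.proj _]
  π n := match n with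
    | 0 => π
    | n + 1 => S.π n
  ι n := match n with
    | 0 => ι
    | n + 1 => S.ι n
  surj n := by cases n; exacts [hπ, S.surj _]
  inj n := by cases n; exacts [hι, S.inj _]
  exact n := by cases n; exacts [h, S.exact _]

end Chain

/-- A free syzygy -/
noncomputable abbrev omega (L : ModuleCat.{u} R) : ModuleCat.{u} R :=
  ModuleCat.of R (LinearMap.ker (Finsupp.linearCombination R (id : L → L)))

/-- iterated syzygies -/
noncomputable def omegaN (L : ModuleCat.{u} R) : ℕ → ModuleCat.{u} R
  | 0 => L
  | n + 1 => omega (omegaN L n)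

/-- The standard chain -/
noncomputable def stdChain (L : ModuleCat.{u} R) : Chain R where
  K := omegaN L
  P n := ModuleCat.of R (omegaN L n →₀ R)
  proj n := inferInstanceAs (Module.Projective R (omegaN L n →₀ R))
  π n := Finsupp.linearCombination R id
  ι n := (LinearMap.ker (Finsupp.linearCombination R (id : omegaN L n → omegaN L n))).subtype
  surj n := Finsupp.linearCombination_id_surjective R _
  inj n := Subtype.val_injective
  exact n := by
    intro x
    exact ⟨fun hx => ⟨⟨x, hx⟩, rfl⟩, by rintro ⟨y, rfl⟩; exact y.2⟩

lemma kill_one {K L P : ModuleCat.{u} R} (hP : Module.Projective R P) (ι : K →ₗ[R] P)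
    (π : P →ₗ[R] L) (hι : Function.Injective ι) (hπ : Function.Surjective π)
    (h : Function.Exact ι π) (r : R) (N : ModuleCat.{u} R) :
    Kill r 1 L N ↔ ∀ f : K →ₗ[R] N, ∃ g : P →ₗ[R] N, g.comp ι = r • f :=
  ((stdChain K).cons (L := L) hP ι π hι hπ h).kill_iff r 0 N

lemma kill_shift {K L P : ModuleCat.{u} R} (hP : Module.Projective R P) (ι : K →ₗ[R] P)
    (π : P →ₗ[R] L) (hι : Function.Injective ι) (hπ : Function.Surjective π)
    (h : Function.Exact ι π) (r : R) (i : ℕ) (N : ModuleCat.{u} R) :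
    Kill r (i + 2) L N ↔ Kill r (i + 1) K N :=
  (((stdChain K).cons (L := L) hP ι π hι hπ h).kill_iff r (i + 1) N).trans
    ((stdChain K).kill_iff r i N).symm

/-- multiplication by `r` on `L` factors through a f.g. projective -/
def Fac (r : R) (L : ModuleCat.{u} R) : Prop := FactorsThroughProj R L (r • LinearMap.id)

lemma mem_ann_iff (r : R) (M : ModuleCat.{u} R) : r ∈ annStableEnd R M ↔ Fac r M := by
  constructor
  · intro h; exact h LinearMap.id
  · rintro ⟨P, h1, h2, g, h, e⟩ f
    refine ⟨P, h1, h2, g.comp f, h, ?_⟩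
    rw [← LinearMap.comp_assoc, e]
    rfl

/-- MCM condition -/
def MCM (L : ModuleCat.{u} R) : Prop := ∀ i, Kill (1 : R) (i + 1) L (ModuleCat.of R R)

lemma ker_exact {P L : Type u} [AddCommGroup P] [Module R P] [AddCommGroup L] [Module R L]
    (π : P →ₗ[R] L) : Function.Exact (LinearMap.ker π).subtype π := by
  intro x
  exact ⟨fun hx => ⟨⟨x, hx⟩, rfl⟩, by rintro ⟨y, rfl⟩; exact y.2⟩

lemma exists_cover [IsNoetherianRing R] (L : ModuleCat.{u} R) (hL : Module.Finite R L) :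
    ∃ (K P : ModuleCat.{u} R) (ι : K →ₗ[R] P) (π : P →ₗ[R] L), Module.Finite R K ∧
      Module.Finite R P ∧ Module.Projective R P ∧ Function.Injective ι ∧ Function.Surjective π ∧
      Function.Exact ι π := by
  obtain ⟨n, π, hπ⟩ := Module.Finite.exists_fin' R L
  refine ⟨ModuleCat.of R (LinearMap.ker π), ModuleCat.of R (Fin n → R),
    (LinearMap.ker π).subtype, π, ?_, ?_, ?_, Subtype.val_injective, hπ, ker_exact π⟩
  · exact inferInstanceAs (Module.Finite R (LinearMap.ker π))
  · exact inferInstanceAs (Module.Finite R (Fin n → R))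
  · exact inferInstanceAs (Module.Projective R (Fin n → R))

lemma ext_proj {K P : ModuleCat.{u} R} (ι : K →ₗ[R] P)
    (h : ∀ f : K →ₗ[R] R, ∃ g : P →ₗ[R] R, g.comp ι = f)
    (Q : ModuleCat.{u} R) (hQ : Module.Projective R Q) (hQ' : Module.Finite R Q)
    (f : K →ₗ[R] Q) : ∃ g : P →ₗ[R] Q, g.comp ι = f := by
  obtain ⟨n, s, hs⟩ := Module.Finite.exists_fin' R Q
  obtain ⟨t, ht⟩ := Module.projective_lifting_property s LinearMap.id hs
  choose g hg using fun i : Fin n => h ((LinearMap.proj i).comp (t.comp f))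
  refine ⟨s.comp (LinearMap.pi g), ?_⟩
  have : (LinearMap.pi g).comp ι = t.comp f := by
    ext x i
    exact LinearMap.congr_fun (hg i) x
  rw [LinearMap.comp_assoc, this, ← LinearMap.comp_assoc, ht, LinearMap.id_comp]

lemma lift_ker {K L P X : ModuleCat.{u} R} (ι : K →ₗ[R] P)
    (π : P →ₗ[R] L) (hι : Function.Injective ι)
    (h : Function.Exact ι π) (φ : X →ₗ[R] P) (hφ : π.comp φ = 0) :
    ∃ ψ : X →ₗ[R] K, ι.comp ψ = φ := by
  let e := LinearEquiv.ofInjective ι hι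
  have hr : ∀ x, φ x ∈ LinearMap.range ι := fun x => (h _).1 (LinearMap.congr_fun hφ x)
  refine ⟨e.symm.toLinearMap.comp (φ.codRestrict _ hr), ?_⟩
  ext x
  have := e.apply_symm_apply (φ.codRestrict _ hr x)
  exact congrArg Subtype.val this

lemma desc_coker {K L P X : ModuleCat.{u} R} (ι : K →ₗ[R] P)
    (π : P →ₗ[R] L) (hπ : Function.Surjective π)
    (h : Function.Exact ι π) (φ : P →ₗ[R] X) (hφ : φ.comp ι = 0) :
    ∃ ψ : L →ₗ[R] X, ψ.comp π = φ := by
  let e := π.quotKerEquivOfSurjective hπ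
  have hk : LinearMap.ker π ≤ LinearMap.ker φ := by
    intro x hx
    obtain ⟨y, rfl⟩ := (h x).1 hx
    exact LinearMap.congr_fun hφ y
  refine ⟨((LinearMap.ker π).liftQ φ hk).comp e.symm.toLinearMap, ?_⟩
  ext x
  have : e.symm (π x) = Submodule.Quotient.mk x := by
    rw [LinearEquiv.symm_apply_eq]; rfl
  exact congrArg ((LinearMap.ker π).liftQ φ hk) this

/-- `r` on `L` stably trivial gives a retraction up to `r`. -/
lemma fac_retract {K L P : ModuleCat.{u} R} (ι : K →ₗ[R] P)
    (π : P →ₗ[R] L) (hι : Function.Injective ι) (hπ : Function.Surjective π)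
    (h : Function.Exact ι π) (r : R) (hr : Fac r L) :
    ∃ ρ : P →ₗ[R] K, ρ.comp ι = r • LinearMap.id := by
  obtain ⟨Q, hQ, -, g, k, e⟩ := hr
  obtain ⟨k', hk'⟩ := Module.projective_lifting_property π k hπ
  obtain ⟨ρ, hρ⟩ := lift_ker ι π hι h (r • LinearMap.id - k'.comp (g.comp π)) (by
    ext x
    have h1 := LinearMap.congr_fun hk' (g (π x))
    have h2 := LinearMap.congr_fun e (π x)
    simp at h1 h2 ⊢
    rw [h1, h2, sub_self])
  refine ⟨ρ, ?_⟩
  ext x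
  apply hι
  have h1 := LinearMap.congr_fun hρ (ι x)
  simpa [h.apply_apply_eq_zero] using h1

lemma fac_up {K L P : ModuleCat.{u} R} (hP : Module.Projective R P) (hP' : Module.Finite R P)
    (ι : K →ₗ[R] P)
    (π : P →ₗ[R] L) (hι : Function.Injective ι) (hπ : Function.Surjective π)
    (h : Function.Exact ι π) (hM : MCM L) (r : R) (hr : Fac r K) : Fac r L := by
  obtain ⟨Q, hQ, hQ', g, k, e⟩ := hr
  have hM1 := (kill_one hP ι π hι hπ h 1 _).1 (hM 0)
  obtain ⟨g', hg'⟩ := ext_proj ι (fun f => by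
    obtain ⟨g, hg⟩ := hM1 f
    exact ⟨g, hg.trans (one_smul _ _)⟩) Q hQ hQ' g
  obtain ⟨φ, hφ⟩ := desc_coker ι π hπ h (r • LinearMap.id - ι.comp (k.comp g')) (by
    ext x
    have h1 := LinearMap.congr_fun hg' x
    have h2 := LinearMap.congr_fun e x
    simp at h1 h2 ⊢
    rw [h1, h2, map_smul, sub_self])
  refine ⟨P, hP, hP', φ, π, ?_⟩
  ext x
  obtain ⟨y, rfl⟩ := hπ x
  have h1 := congrArg π (LinearMap.congr_fun hφ y)
  simpa [h.apply_apply_eq_zero] using h1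

lemma MCM.syz {K L P : ModuleCat.{u} R} (hP : Module.Projective R P)
    (ι : K →ₗ[R] P)
    (π : P →ₗ[R] L) (hι : Function.Injective ι) (hπ : Function.Surjective π)
    (h : Function.Exact ι π) (hM : MCM L) : MCM K :=
  fun i => (kill_shift hP ι π hι hπ h 1 i _).1 (hM (i + 1))

/-- annihilator of the stable endomorphism ring is in `ca` -/
lemma fac_kill [IsNoetherianRing R] (r : R) (N : ModuleCat.{u} R) (i : ℕ) :
    ∀ L : ModuleCat.{u} R, Module.Finite R L → Fac r L → Kill r (i + 1) L N := by
  induction i with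
  | zero =>
    intro L hL hr
    obtain ⟨K, P, ι, π, hK, hPf, hP, hι, hπ, h⟩ := exists_cover L hL
    obtain ⟨ρ, hρ⟩ := fac_retract ι π hι hπ h r hr
    refine (kill_one hP ι π hι hπ h r N).2 fun f => ⟨f.comp ρ, ?_⟩
    rw [LinearMap.comp_assoc, hρ]
    ext x; simp
  | succ i ih =>
    intro L hL hr
    obtain ⟨K, P, ι, π, hK, hPf, hP, hι, hπ, h⟩ := exists_cover L hL
    obtain ⟨ρ, hρ⟩ := fac_retract ι π hι hπ h r hr
    exact (kill_shift hP ι π hι hπ h r i N).2 (ih K hK ⟨P, hP, hPf, ι, ρ, hρ⟩)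

lemma fac_cokill [IsNoetherianRing R] (r : R) (M : ModuleCat.{u} R) (hr : Fac r M) (i : ℕ) :
    ∀ L : ModuleCat.{u} R, Module.Finite R L → Kill (1 : R) (i + 1) L (ModuleCat.of R R) →
      Kill r (i + 1) L M := by
  induction i with
  | zero =>
    intro L hL hk
    obtain ⟨K, P, ι, π, hK, hPf, hP, hι, hπ, h⟩ := exists_cover L hL
    obtain ⟨Q, hQ, hQ', g, k, e⟩ := hr
    have hM1 := (kill_one hP ι π hι hπ h 1 _).1 hk
    refine (kill_one hP ι π hι hπ h r M).2 fun f => ?_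
    obtain ⟨g', hg'⟩ := ext_proj ι (fun f => by
      obtain ⟨g, hg⟩ := hM1 f
      exact ⟨g, hg.trans (one_smul _ _)⟩) Q hQ hQ' (g.comp f)
    refine ⟨k.comp g', ?_⟩
    rw [LinearMap.comp_assoc, hg', ← LinearMap.comp_assoc, e]
    rfl
  | succ i ih =>
    intro L hL hk
    obtain ⟨K, P, ι, π, hK, hPf, hP, hι, hπ, h⟩ := exists_cover L hL
    exact (kill_shift hP ι π hι hπ h r i M).2
      (ih K hK ((kill_shift hP ι π hι hπ h 1 i _).1 hk))

lemma fac_of_kill [IsNoetherianRing R] (r : R) (n : ℕ) :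
    ∀ L : ModuleCat.{u} R, Module.Finite R L → MCM L →
      (∀ N : ModuleCat.{u} R, Module.Finite R N → Kill r (n + 1) L N) → Fac r L := by
  induction n with
  | zero =>
    intro L hL hM hk
    obtain ⟨K, P, ι, π, hK, hPf, hP, hι, hπ, h⟩ := exists_cover L hL
    obtain ⟨ρ, hρ⟩ := (kill_one hP ι π hι hπ h r K).1 (hk K hK) LinearMap.id
    exact fac_up hP hPf ι π hι hπ h hM r ⟨P, hP, hPf, ι, ρ, hρ⟩
  | succ n ih =>
    intro L hL hM hk
    obtain ⟨K, P, ι, π, hK, hPf, hP, hι, hπ, h⟩ := exists_cover L hL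
    exact fac_up hP hPf ι π hι hπ h hM r (ih K hK (hM.syz hP ι π hι hπ h) fun N hN =>
      (kill_shift hP ι π hι hπ h r n N).1 (hk N hN))

/-- vanishing of `Ext` of transposes -/
lemma transpose_kill [IsNoetherianRing R] (d : ℕ)
    (hd : ∀ i, d ≤ i → ∀ N : ModuleCat.{u} R, Kill (1 : R) (i + 1) N (ModuleCat.of R R))
    (k : ℕ) : ∀ (L K P₀ P₁ : ModuleCat.{u} R) (ι : K →ₗ[R] P₀) (π : P₀ →ₗ[R] L)
      (σ : P₁ →ₗ[R] K), Module.Finite R K → Module.Finite R P₀ → Module.Finite R P₁ →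
      Module.Projective R P₀ → Module.Projective R P₁ → Function.Injective ι →
      Function.Surjective π → Function.Exact ι π → Function.Surjective σ → MCM L →
      ∀ i, d ≤ i + k → Kill (1 : R) (i + 1)
        (ModuleCat.of R (Module.Dual R P₁ ⧸ LinearMap.range (Module.Dual.transpose (R := R)
          (ι.comp σ)))) (ModuleCat.of R R) := by
  induction k with
  | zero =>
    intro L K P₀ P₁ ι π σ _ _ _ _ _ _ _ _ _ _ i hi
    exact hd i hi _
  | succ k ih =>
    intro L K P₀ P₁ ι π σ hK hF₀ hF₁ hP₀ hP₁ hι hπ h hσ hM i hi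
    let K₂ := ModuleCat.of R (LinearMap.ker σ)
    have hK₂ : Module.Finite R K₂ := inferInstanceAs (Module.Finite R (LinearMap.ker σ))
    let ι₂ : K₂ →ₗ[R] P₁ := (LinearMap.ker σ).subtype
    have hι₂ : Function.Injective ι₂ := Subtype.val_injective
    have h₂ : Function.Exact ι₂ σ := ker_exact σ
    obtain ⟨n, σ₂, hσ₂⟩ := Module.Finite.exists_fin' R K₂
    let P₂ := ModuleCat.of R (Fin n → R)
    have hF₂ : Module.Finite R P₂ := inferInstanceAs (Module.Finite R (Fin n → R))
    have hP₂ : Module.Projective R P₂ := inferInstanceAs (Module.Projective R (Fin n → R))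
    have key := ih K K₂ P₁ P₂ ι₂ σ σ₂ hK₂ hF₁ hF₂ hP₁ hP₂ hι₂ hσ h₂ hσ₂
      (hM.syz hP₀ ι π hι hπ h) (i + 1) (by omega)
    have hD : Module.Projective R (ModuleCat.of R (Module.Dual R P₂)) :=
      inferInstanceAs (Module.Projective R (Module.Dual R P₂))
    let D₁ := Module.Dual.transpose (R := R) (ι.comp σ)
    let D₂ := Module.Dual.transpose (R := R) (ι₂.comp σ₂)
    have hker : LinearMap.ker D₂ = LinearMap.range D₁ := by
      ext f
      constructor
      · intro hf
        have hf' : ∀ x, f (ι₂ (σ₂ x)) = 0 := fun x => LinearMap.congr_fun hf x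
        obtain ⟨ψ, hψ⟩ := desc_coker (X := ModuleCat.of R R) ι₂ σ hσ h₂ f (by
          ext x
          obtain ⟨y, rfl⟩ := hσ₂ x
          exact hf' y)
        obtain ⟨g, hg⟩ := (kill_one hP₀ ι π hι hπ h 1 _).1 (hM 0) ψ
        refine ⟨g, ?_⟩
        rw [one_smul] at hg
        change g.comp (ι.comp σ) = f
        rw [← LinearMap.comp_assoc, hg, hψ]
      · rintro ⟨g, rfl⟩
        refine LinearMap.ext fun x => ?_
        change g (ι (σ (ι₂ (σ₂ x)))) = 0
        rw [h₂.apply_apply_eq_zero, map_zero, map_zero]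
    let j : (Module.Dual R P₁ ⧸ LinearMap.range D₁) →ₗ[R] Module.Dual R P₂ :=
      (LinearMap.range D₁).liftQ D₂ hker.ge
    have hj : Function.Injective j := by
      rw [← LinearMap.ker_eq_bot]
      exact Submodule.ker_liftQ_eq_bot _ _ _ hker.le
    have hex : Function.Exact j (LinearMap.range D₂).mkQ := by
      rw [LinearMap.exact_iff, Submodule.ker_mkQ]
      exact (Submodule.range_liftQ _ _ _).symm
    exact (kill_shift (K := ModuleCat.of R (Module.Dual R P₁ ⧸ LinearMap.range D₁))
      (P := ModuleCat.of R (Module.Dual R P₂))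
      (L := ModuleCat.of R (Module.Dual R P₂ ⧸ LinearMap.range D₂)) hD j
      (LinearMap.range D₂).mkQ hj (Submodule.mkQ_surjective _) hex 1 i _).1 key

lemma torsionless [IsNoetherianRing R] (d : ℕ)
    (hd : ∀ i, d ≤ i → ∀ N : ModuleCat.{u} R, Kill (1 : R) (i + 1) N (ModuleCat.of R R))
    (L : ModuleCat.{u} R) (hL : Module.Finite R L) (hM : MCM L) (x : L)
    (hx : ∀ f : Module.Dual R L, f x = 0) : x = 0 := by
  obtain ⟨K, P₀, ι, π, hK, hF₀, hP₀, hι, hπ, h⟩ := exists_cover L hL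
  obtain ⟨n, σ, hσ⟩ := Module.Finite.exists_fin' R K
  let P₁ := ModuleCat.of R (Fin n → R)
  have hF₁ : Module.Finite R P₁ := inferInstanceAs (Module.Finite R (Fin n → R))
  have hP₁ : Module.Projective R P₁ := inferInstanceAs (Module.Projective R (Fin n → R))
  have key := transpose_kill d hd d L K P₀ P₁ ι π σ hK hF₀ hF₁ hP₀ hP₁ hι hπ h hσ hM 0 (by omega)
  let D : Module.Dual R P₀ →ₗ[R] Module.Dual R P₁ := Module.Dual.transpose (R := R) (ι.comp σ)
  have hD : Module.Projective R (ModuleCat.of R (Module.Dual R P₁)) :=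
    inferInstanceAs (Module.Projective R (Module.Dual R P₁))
  have hext := (kill_one (K := ModuleCat.of R (LinearMap.range D))
      (P := ModuleCat.of R (Module.Dual R P₁))
      (L := ModuleCat.of R (Module.Dual R P₁ ⧸ LinearMap.range D)) hD (LinearMap.range D).subtype
      (LinearMap.range D).mkQ Subtype.val_injective (Submodule.mkQ_surjective _) (by
        rw [LinearMap.exact_iff, Submodule.ker_mkQ]
        exact (Submodule.range_subtype _).symm) 1 (ModuleCat.of R R)).1 key
  obtain ⟨p, rfl⟩ := hπ x
  obtain ⟨ψ, hψ⟩ := desc_coker (K := ModuleCat.of R (LinearMap.ker D))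
    (P := ModuleCat.of R (Module.Dual R P₀)) (L := ModuleCat.of R (LinearMap.range D))
    (X := ModuleCat.of R R)
    (LinearMap.ker D).subtype D.rangeRestrict D.surjective_rangeRestrict
    (by
      rw [LinearMap.exact_iff, LinearMap.ker_rangeRestrict]
      exact (Submodule.range_subtype _).symm)
    (Module.Dual.eval R P₀ p) (by
      ext f
      obtain ⟨f, hf⟩ := f
      obtain ⟨g, hg⟩ := desc_coker (X := ModuleCat.of R R) ι π hπ h f (by
        ext y
        obtain ⟨z, rfl⟩ := hσ y
        exact LinearMap.congr_fun hf z)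
      have h1 := hx g
      have h2 := LinearMap.congr_fun hg p
      exact h2.symm.trans h1)
  obtain ⟨ev, hev⟩ := hext ψ
  obtain ⟨q, hq⟩ := (Module.evalEquiv R P₁).surjective ev
  have hpq : p = ι (σ q) := by
    apply (Module.evalEquiv R P₀).injective
    refine LinearMap.ext fun f => ?_
    have h1 : ψ (D.rangeRestrict f) = f p := LinearMap.congr_fun hψ f
    have h2 : ev (D f) = ψ (D.rangeRestrict f) := by
      have := LinearMap.congr_fun hev (D.rangeRestrict f)
      rw [one_smul] at this
      exact this
    have h3 : ev (D f) = f (ι (σ q)) := by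
      rw [← hq]; rfl
    change f p = f (ι (σ q))
    rw [← h1, ← h2, h3]
  rw [hpq, h.apply_apply_eq_zero]

lemma exists_cosyz [IsNoetherianRing R] (d : ℕ)
    (hd : ∀ i, d ≤ i → ∀ N : ModuleCat.{u} R, Kill (1 : R) (i + 1) N (ModuleCat.of R R))
    (K : ModuleCat.{u} R) (hK : Module.Finite R K) (hM : MCM K) :
    ∃ (L P : ModuleCat.{u} R) (ι : K →ₗ[R] P) (π : P →ₗ[R] L), Module.Finite R L ∧ MCM L ∧
      Module.Finite R P ∧ Module.Projective R P ∧ Function.Injective ι ∧ Function.Surjective π ∧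
      Function.Exact ι π := by
  have hfin : Module.Finite R (Module.Dual R K) := by
    obtain ⟨m, t, ht⟩ := Module.Finite.exists_fin' R K
    have h0 : Module.Finite R (Module.Dual R (Fin m → R)) := inferInstance
    have h1 : IsNoetherian R (Module.Dual R (Fin m → R)) := isNoetherian_of_isNoetherianRing_of_finite R _
    refine Module.Finite.of_injective (Module.Dual.transpose (R := R) t) ?_
    intro f g hfg
    refine LinearMap.ext fun x => ?_
    obtain ⟨y, rfl⟩ := ht x
    exact LinearMap.congr_fun hfg y
  obtain ⟨n, s, hs⟩ := Module.Finite.exists_fin' R (Module.Dual R K)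
  let ι : K →ₗ[R] (Fin n → R) := LinearMap.pi fun i => s (Pi.single i 1)
  have hsι : ∀ c : Fin n → R, ∀ x, s c x = ∑ i, c i * ι x i := by
    intro c x
    conv_lhs => rw [pi_eq_sum_univ' c]
    simp [ι, LinearMap.sum_apply]
  have hι : Function.Injective ι := by
    rw [← LinearMap.ker_eq_bot, LinearMap.ker_eq_bot']
    intro x hx
    refine torsionless d hd K hK hM x fun f => ?_
    obtain ⟨c, rfl⟩ := hs f
    rw [hsι, hx]; simp
  have hP : Module.Projective R (ModuleCat.of R (Fin n → R)) :=
    inferInstanceAs (Module.Projective R (Fin n → R))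
  have hex : Function.Exact ι (LinearMap.range ι).mkQ := by
    rw [LinearMap.exact_iff, Submodule.ker_mkQ]
  refine ⟨ModuleCat.of R ((Fin n → R) ⧸ LinearMap.range ι), ModuleCat.of R (Fin n → R), ι,
    (LinearMap.range ι).mkQ, ?_, ?_, ?_, hP, hι, Submodule.mkQ_surjective _, hex⟩
  · exact inferInstanceAs (Module.Finite R ((Fin n → R) ⧸ LinearMap.range ι))
  · intro i
    cases i with
    | zero =>
      refine (kill_one (P := ModuleCat.of R (Fin n → R)) hP ι (LinearMap.range ι).mkQ hι
        (Submodule.mkQ_surjective _) hex 1 _).2 fun f => ?_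
      obtain ⟨c, hc⟩ := hs f
      refine ⟨∑ i, c i • LinearMap.proj i, ?_⟩
      rw [one_smul]
      refine LinearMap.ext fun x => ?_
      have := hsι c x
      rw [hc] at this
      refine Eq.trans ?_ this.symm
      simp [LinearMap.sum_apply]
    | succ i =>
      exact (kill_shift (P := ModuleCat.of R (Fin n → R)) hP ι (LinearMap.range ι).mkQ hι
        (Submodule.mkQ_surjective _) hex 1 i _).2 (hM i)
  · exact inferInstanceAs (Module.Finite R (Fin n → R))

lemma exists_cosyzN [IsNoetherianRing R] (d : ℕ)
    (hd : ∀ i, d ≤ i → ∀ N : ModuleCat.{u} R, Kill (1 : R) (i + 1) N (ModuleCat.of R R))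
    (m : ℕ) : ∀ (K : ModuleCat.{u} R), Module.Finite R K → MCM K →
    ∃ L : ModuleCat.{u} R, Module.Finite R L ∧ ∀ (i : ℕ) (r : R) (Y : ModuleCat.{u} R),
      Kill r (i + m + 1) L Y → Kill r (i + 1) K Y := by
  induction m with
  | zero => intro K hK hM; exact ⟨K, hK, fun i r Y h => h⟩
  | succ m ihm =>
    intro K hK hM
    obtain ⟨C, P, ι, π, hC, hCM, hPf, hP, hι, hπ, h⟩ := exists_cosyz d hd K hK hM
    obtain ⟨L, hL, hLk⟩ := ihm C hC hCM
    refine ⟨L, hL, fun i r Y hk => (kill_shift hP ι π hι hπ h r i Y).1 (hLk (i + 1) r Y ?_)⟩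
    have : i + (m + 1) + 1 = i + 1 + m + 1 := by omega
    rwa [this] at hk

lemma fac_of_cokill [IsNoetherianRing R] (d : ℕ)
    (hd : ∀ i, d ≤ i → ∀ N : ModuleCat.{u} R, Kill (1 : R) (i + 1) N (ModuleCat.of R R))
    (M : ModuleCat.{u} R) (hF : Module.Finite R M) (hM : MCM M) (r : R) (n : ℕ)
    (hk : ∀ N : ModuleCat.{u} R, Module.Finite R N → Kill r (n + 1) N M) : Fac r M := by
  obtain ⟨C, P, ι, π, hC, hCM, hPf, hP, hι, hπ, h⟩ := exists_cosyz d hd M hF hM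
  obtain ⟨L, hL, hLk⟩ := exists_cosyzN d hd n C hC hCM
  obtain ⟨ρ, hρ⟩ := (kill_one hP ι π hι hπ h r M).1 (hLk 0 r M (by
    rw [Nat.zero_add]; exact hk L hL)) LinearMap.id
  exact ⟨P, hP, hPf, ι, ρ, hρ⟩

end CocaProof

/-- over a Gorenstein ring with `id_R(R) = d`, for a maximal
Cohen–Macaulay module `M`,
`coca_R^{d+1}(M) = coca_R(M) = ann End̲_R(M) = ca_R(M)`. -/
theorem stmt16 (R : Type u) [CommRing R] [IsNoetherianRing R] (d : ℕ)
    (hd : injDimLE R d (ModuleCat.of R R))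
    (hd' : ∀ m : ℕ, injDimLE R m (ModuleCat.of R R) → d ≤ m)
    (M : ModuleCat.{u} R) [Module.Finite R M]
    (hMCM : ∀ i : ℕ, 0 < i → Subsingleton (ExtM R i M (ModuleCat.of R R))) :
    (cocaN R (d + 1) M : Set R) = coca R M ∧
      coca R M = annStableEnd R M ∧ annStableEnd R M = ca R M := by
  have hd1 : ∀ i, d ≤ i → ∀ N : ModuleCat.{u} R,
      CocaProof.Kill (1 : R) (i + 1) N (ModuleCat.of R R) := by
    intro i hi N x
    have := hd (i + 1) (by omega) N
    exact Subsingleton.elim _ _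
  have hM : CocaProof.MCM M := by
    intro i x
    have := hMCM (i + 1) (by omega)
    exact Subsingleton.elim _ _
  have hF : Module.Finite R M := inferInstance
  have h1 : (cocaN R (d + 1) M : Set R) ⊆ coca R M :=
    Set.subset_iUnion (fun n : ℕ => (cocaN R n M : Set R)) (d + 1)
  have h2 : coca R M ⊆ annStableEnd R M := by
    intro r hr
    obtain ⟨n, hn⟩ := Set.mem_iUnion.1 hr
    rw [CocaProof.mem_ann_iff]
    exact CocaProof.fac_of_cokill d hd1 M hF hM r n fun N hN x => hn (n + 1) (by omega) N hN x
  have h3 : annStableEnd R M ⊆ (cocaN R (d + 1) M : Set R) := by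
    intro r hr
    rw [CocaProof.mem_ann_iff] at hr
    intro i hi N hN x
    obtain ⟨j, rfl⟩ : ∃ j, i = j + 1 := ⟨i - 1, by omega⟩
    exact CocaProof.fac_cokill r M hr j N hN (hd1 j (by omega) N) x
  have h4 : annStableEnd R M ⊆ ca R M := by
    intro r hr
    rw [CocaProof.mem_ann_iff] at hr
    refine Set.mem_iUnion.2 ⟨1, ?_⟩
    intro i hi N hN x
    obtain ⟨j, rfl⟩ : ∃ j, i = j + 1 := ⟨i - 1, by omega⟩
    exact CocaProof.fac_kill r N j M hF hr x
  have h5 : ca R M ⊆ annStableEnd R M := by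
    intro r hr
    obtain ⟨n, hn⟩ := Set.mem_iUnion.1 hr
    rw [CocaProof.mem_ann_iff]
    exact CocaProof.fac_of_kill r n M hF hM fun N hN x => hn (n + 1) (by omega) N hN x
  exact ⟨h1.antisymm (h2.trans h3), h2.antisymm (h3.trans h1), h4.antisymm h5⟩
end

section
/- Let R be a commutative Noetherian ring and suppose there exist s ≥ 0 and a finitely generated module G such that the s-th syzygy of every finitely generated R-module lies in the smallest resolving subcategory containing G. Then R has finite Krull dimension, and dim(R) ≤ s + Rfd_R(G) + 1, where Rfd_R(G) = sup{depth(R_p) − depth(G_p) : p ∈ Spec(R)} is the large restricted flat dimension of G (and G ≠ 0). -/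
open CategoryTheory

section helpers

open RingTheory.Sequence Function TensorProduct

/-- Weak regularity passes to direct summands. -/
lemma wr_summand {A : Type u} [CommRing A] (xs : List A) :
    ∀ {X Y : Type u} [AddCommGroup X] [Module A X] [AddCommGroup Y] [Module A Y]
      (i : X →ₗ[A] Y) (q : Y →ₗ[A] X), q.comp i = LinearMap.id →
      IsWeaklyRegular Y xs → IsWeaklyRegular X xs := by
  induction xs with
  | nil => intros; exact IsWeaklyRegular.nil _ _
  | cons x xs ih =>
    intro X Y _ _ _ _ i q h hY
    rw [isWeaklyRegular_cons_iff] at hY ⊢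
    refine ⟨hY.1.of_injective i ?_, ih (QuotSMulTop.map x i) (QuotSMulTop.map x q) ?_ hY.2⟩
    · exact LeftInverse.injective (g := q) (fun m => LinearMap.congr_fun h m)
    · rw [← QuotSMulTop.map_comp, h, QuotSMulTop.map_id]

/-- Reduction of a short exact sequence modulo an element regular on the cokernel. -/
lemma quot_exact {A : Type u} [CommRing A] (x : A)
    {X Y Z : Type u} [AddCommGroup X] [Module A X] [AddCommGroup Y] [Module A Y]
    [AddCommGroup Z] [Module A Z] (f : X →ₗ[A] Y) (g : Y →ₗ[A] Z)
    (hf : Injective f) (hfg : Exact f g) (hZ : IsSMulRegular Z x) :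
    Injective (QuotSMulTop.map x f) := by
  have h0 : Exact (0 : X →ₗ[A] X) f := by
    intro y
    constructor
    · intro hy; exact ⟨0, by simpa using (hf (by simpa using hy)).symm⟩
    · rintro ⟨z, rfl⟩; simp
  have := QuotSMulTop.map_first_exact_on_four_term_exact_of_isSMulRegular_last h0 hfg hZ
  rw [injective_iff_map_eq_zero]
  intro a ha
  obtain ⟨z, rfl⟩ := (this a).1 ha
  simp

/-- Weak regularity is closed under extensions. -/
lemma wr_ext {A : Type u} [CommRing A] (xs : List A) :
    ∀ {X Y Z : Type u} [AddCommGroup X] [Module A X] [AddCommGroup Y] [Module A Y]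
      [AddCommGroup Z] [Module A Z]
      (f : X →ₗ[A] Y) (g : Y →ₗ[A] Z), Injective f → Exact f g → Surjective g →
      IsWeaklyRegular X xs → IsWeaklyRegular Z xs → IsWeaklyRegular Y xs := by
  induction xs with
  | nil => intros; exact IsWeaklyRegular.nil _ _
  | cons x xs ih =>
    intro X Y Z _ _ _ _ _ _ f g hf hfg hg hX hZ
    rw [isWeaklyRegular_cons_iff] at hX hZ ⊢
    exact ⟨isSMulRegular_of_range_eq_ker hf hfg.linearMap_ker_eq.symm hX.1 hZ.1,
      ih _ _ (quot_exact x f g hf hfg hZ.1) (QuotSMulTop.map_exact x hfg hg)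
        (QuotSMulTop.map_surjective x hg) hX.2 hZ.2⟩

/-- Weak regularity is closed under kernels of epimorphisms. -/
lemma wr_ker {A : Type u} [CommRing A] (xs : List A) :
    ∀ {X Y Z : Type u} [AddCommGroup X] [Module A X] [AddCommGroup Y] [Module A Y]
      [AddCommGroup Z] [Module A Z]
      (f : X →ₗ[A] Y) (g : Y →ₗ[A] Z), Injective f → Exact f g → Surjective g →
      IsWeaklyRegular Y xs → IsWeaklyRegular Z xs → IsWeaklyRegular X xs := by
  induction xs with
  | nil => intros; exact IsWeaklyRegular.nil _ _
  | cons x xs ih =>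
    intro X Y Z _ _ _ _ _ _ f g hf hfg hg hX hZ
    rw [isWeaklyRegular_cons_iff] at hX hZ ⊢
    exact ⟨hX.1.of_injective f hf,
      ih _ _ (quot_exact x f g hf hfg hZ.1) (QuotSMulTop.map_exact x hfg hg)
        (QuotSMulTop.map_surjective x hg) hX.2 hZ.2⟩

/-- `xs` is weakly regular on `M` and the quotient has a nonzero element killed by `I`. -/
def Bad {A : Type u} [CommRing A] (I : Ideal A) :
    List A → (M : Type u) → [AddCommGroup M] → [Module A M] → Prop
  | [], M, _, _ => ∃ z : M, z ≠ 0 ∧ ∀ a ∈ I, a • z = 0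
  | x :: xs, M, _, _ => IsSMulRegular M x ∧ Bad I xs (QuotSMulTop x M)

lemma bad_not_wr {A : Type u} [CommRing A] (I : Ideal A) (x : A) (hx : x ∈ I) (ys : List A)
    (xs : List A) : ∀ {M : Type u} [AddCommGroup M] [Module A M],
      Bad I xs M → ¬ IsWeaklyRegular M (xs ++ x :: ys) := by
  induction xs with
  | nil =>
    rintro M _ _ ⟨z, hz, h⟩ hw
    rw [List.nil_append, isWeaklyRegular_cons_iff] at hw
    exact hz (hw.1.right_eq_zero_of_smul (h x hx))
  | cons y xs ih =>
    rintro M _ _ ⟨_, h⟩ hw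
    rw [List.cons_append, isWeaklyRegular_cons_iff] at hw
    exact ih h hw.2

lemma bad_syz {A : Type u} [CommRing A] (I : Ideal A) (x : A) (hx : x ∈ I) (ys : List A)
    (xs : List A) : ∀ {X Y Z : Type u} [AddCommGroup X] [Module A X] [AddCommGroup Y] [Module A Y]
      [AddCommGroup Z] [Module A Z]
      (f : X →ₗ[A] Y) (g : Y →ₗ[A] Z), Injective f → Exact f g → Surjective g →
      IsWeaklyRegular Y (xs ++ x :: ys) → Bad I xs Z → Bad I (xs ++ [x]) X := by
  induction xs with
  | nil =>
    rintro X Y Z _ _ _ _ _ _ f g hf hfg hg hY ⟨z, hz, hI⟩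
    rw [List.nil_append, isWeaklyRegular_cons_iff] at hY
    refine ⟨hY.1.of_injective f hf, ?_⟩
    obtain ⟨y, rfl⟩ := hg z
    have key : ∀ a : A, g (a • y) = 0 → ∃ w, f w = a • y := fun a ha => (hfg _).1 ha
    have hxI : g (x • y) = 0 := by rw [map_smul]; exact hI x hx
    obtain ⟨w, hw⟩ := key x hxI
    refine ⟨Submodule.Quotient.mk w, ?_, ?_⟩
    · intro h0
      rw [Submodule.Quotient.mk_eq_zero, Submodule.mem_smul_pointwise_iff_exists] at h0
      obtain ⟨v, -, hv⟩ := h0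
      have : x • f v = x • y := by rw [← map_smul, hv, hw]
      exact hz ((hfg y).2 ⟨v, hY.1 this⟩)
    · intro a ha
      rw [← Submodule.Quotient.mk_smul, Submodule.Quotient.mk_eq_zero,
        Submodule.mem_smul_pointwise_iff_exists]
      obtain ⟨v, hv⟩ := key a (by rw [map_smul]; exact hI a ha)
      refine ⟨v, trivial, hf ?_⟩
      rw [map_smul, map_smul, hv, hw, smul_comm]
  | cons y xs ih =>
    rintro X Y Z _ _ _ _ _ _ f g hf hfg hg hY ⟨hZ, hB⟩
    rw [List.cons_append, isWeaklyRegular_cons_iff] at hY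
    exact ⟨hY.1.of_injective f hf, ih _ _ (quot_exact y f g hf hfg hZ)
      (QuotSMulTop.map_exact y hfg hg) (QuotSMulTop.map_surjective y hg) hY.2 hB⟩

/-- Choice of a prime and of a long sequence regular at that prime. -/
lemma choose_prime {A : Type u} [CommRing A] [IsNoetherianRing A] (n : ℕ) :
    ∀ (N : Type u) [AddCommGroup N] [Module A N] [Module.Finite A N]
      (c : LTSeries (PrimeSpectrum A)), c.length = n + 1 →
      ∃ p : PrimeSpectrum A, c.head ≤ p ∧ p < c.last ∧ ∃ xs : List A, xs.length = n ∧
        (∀ x ∈ xs, x ∈ p.asIdeal) ∧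
        IsWeaklyRegular (Localization.AtPrime p.asIdeal ⊗[A] N) xs := by
  induction n with
  | zero =>
    intro N _ _ _ c hc
    refine ⟨c.head, le_rfl, ?_, [], rfl, by simp, IsWeaklyRegular.nil _ _⟩
    exact c.strictMono (Fin.lt_def.2 (by simp [hc]))
  | succ n ih =>
    intro N _ _ _ c hc
    obtain ⟨x, hxP, hx⟩ : ∃ x ∈ c.last.asIdeal, ∀ Q ∈ associatedPrimes A N,
        ¬ c.last.asIdeal ≤ Q → x ∉ Q := by
      by_contra! hcon
      have hfin : ({Q ∈ associatedPrimes A N | ¬ c.last.asIdeal ≤ Q}).Finite :=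
        (associatedPrimes.finite A N).subset (fun Q h => h.1)
      have := (Ideal.subset_union_prime_finite hfin (f := id) ⊥ ⊥
        (fun i hi _ _ => hi.1.isPrime) (I := c.last.asIdeal)).1 (by
          intro x hx
          obtain ⟨Q, h1, h2, h3⟩ := hcon x hx
          exact Set.mem_biUnion (x := Q) ⟨h1, h2⟩ h3)
      obtain ⟨Q, hQ, hle⟩ := this
      exact hQ.2 hle
    obtain ⟨q, hxq, hlen, hhead, hlast⟩ :=
      PrimeSpectrum.exist_ltSeries_mem_one_of_mem_last c hxP
    have hq0 : q.length ≠ 0 := by omega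
    obtain ⟨p, hp1, hp2, xs, hxs, hmem, hw⟩ :=
      ih (QuotSMulTop x N) (q.tail hq0) (by rw [RelSeries.tail_length]; omega)
    rw [RelSeries.head_tail] at hp1
    rw [RelSeries.last_tail] at hp2
    have h01 : q.head ≤ q 1 := q.monotone (Fin.zero_le _)
    refine ⟨p, ?_, hlast ▸ hp2, x :: xs, by simp [hxs], ?_, ?_⟩
    · rw [hhead]; exact h01.trans hp1
    · intro y hy
      rcases List.mem_cons.1 hy with rfl | hy
      · exact hp1 hxq
      · exact hmem y hy
    · rw [isWeaklyRegular_cons_iff]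
      refine ⟨?_, ((QuotSMulTop.tensorQuotSMulTopEquivQuotSMulTop x _ N).isWeaklyRegular_congr
        xs).1 hw⟩
      set B := Localization.AtPrime p.asIdeal
      have hreg : IsSMulRegular (B ⊗[A] N) (algebraMap A B x) := by
        by_contra hnot
        have hmem : algebraMap A B x ∈ ⋃ p ∈ associatedPrimes B (B ⊗[A] N), (p : Set B) := by
          rw [biUnion_associatedPrimes_eq_compl_regular]
          exact hnot
        simp only [Set.mem_iUnion] at hmem
        obtain ⟨Q, hQ, hxQ⟩ := hmem
        have hQp : Q.IsPrime := hQ.isPrime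
        have h1 := Module.associatedPrimes.comap_mem_associatedPrimes_of_mem_associatedPrimes_of_isLocalizedModule_of_fg
          p.asIdeal.primeCompl (TensorProduct.mk A B N 1) Q hQ
          ((isNoetherianRing_iff_ideal_fg A).mp ‹_› _)
        refine hx _ h1 ?_ hxQ
        intro hle
        have h2 : Q.comap (algebraMap A B) ≤ p.asIdeal := by
          intro a ha
          by_contra hap
          exact hQp.ne_top (Ideal.eq_top_of_isUnit_mem _ ha
            (IsLocalization.map_units B (⟨a, hap⟩ : p.asIdeal.primeCompl)))
        have h3 : c.last ≤ p := hle.trans h2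
        rw [hlast] at h3
        exact absurd hp2 (not_lt_of_ge h3)
      intro a b hab
      apply hreg
      simpa [algebraMap_smul] using hab

end helpers

section main

open RingTheory.Sequence Function TensorProduct

lemma chain_length_le (R : Type u) [CommRing R] [IsNoetherianRing R] (s : ℕ)
    (G : ModuleCat.{u} R) [Module.Finite R G]
    (hgen : ∀ M : ModuleCat.{u} R, Module.Finite R M →
      ∀ K : ModuleCat.{u} R, IsSyz R s M K → K ∈ resCl R G)
    (c : LTSeries (PrimeSpectrum R)) : c.length ≤ s + 1 := by
  by_contra! hlen
  obtain ⟨n, hn⟩ : ∃ n, c.length = n + 1 := ⟨c.length - 1, by omega⟩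
  obtain ⟨p, -, -, xs, hxs, hmem, hw⟩ := choose_prime n (R × G) c hn
  set F := Localization.AtPrime p.asIdeal with hF
  have hflat : Module.Flat R F := IsLocalization.flat F p.asIdeal.primeCompl
  -- regularity on the factors
  have hwG : IsWeaklyRegular (F ⊗[R] G) xs := by
    refine wr_summand xs ((LinearMap.inr R R G).lTensor F) ((LinearMap.snd R R G).lTensor F) ?_ hw
    rw [← LinearMap.lTensor_comp, LinearMap.snd_comp_inr, LinearMap.lTensor_id]
  have hwR : IsWeaklyRegular F xs := by
    have : IsWeaklyRegular (F ⊗[R] R) xs := by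
      refine wr_summand xs ((LinearMap.inl R R G).lTensor F)
        ((LinearMap.fst R R G).lTensor F) ?_ hw
      rw [← LinearMap.lTensor_comp, LinearMap.fst_comp_inl, LinearMap.lTensor_id]
    exact ((TensorProduct.rid R F).isWeaklyRegular_congr xs).1 this
  have hwP : ∀ P : ModuleCat.{u} R, Module.Projective R P → IsWeaklyRegular (F ⊗[R] P) xs := by
    intro P hP
    exact hwR.isWeaklyRegular_rTensor
  -- exactness
  have hex : ∀ (X Y Z : ModuleCat.{u} R) (f : X →ₗ[R] Y) (g : Y →ₗ[R] Z), Injective f →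
      Exact f g → Surjective g → Injective (f.lTensor F) ∧ Exact (f.lTensor F) (g.lTensor F) ∧
        Surjective (g.lTensor F) := by
    intro X Y Z f g hf hfg hg
    exact ⟨Module.Flat.lTensor_preserves_injective_linearMap f hf, lTensor_exact F hfg hg,
      LinearMap.lTensor_surjective F hg⟩
  have hsyz : ∀ (L P K : ModuleCat.{u} R) (f : P →ₗ[R] L), Surjective f →
      (K ≃ₗ[R] LinearMap.ker f) → ∃ i : K →ₗ[R] P, Injective i ∧ Exact i f := by
    intro L P K f hf e
    refine ⟨(LinearMap.ker f).subtype.comp e.toLinearMap, ?_, ?_⟩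
    · exact (LinearMap.ker f).injective_subtype.comp e.injective
    · intro y
      constructor
      · intro hy; exact ⟨e.symm ⟨y, hy⟩, by simp⟩
      · rintro ⟨k, rfl⟩; exact (e k).2
  have hres : IsResolving R {X | IsWeaklyRegular (F ⊗[R] X) xs} := by
    refine ⟨fun P _ hP => hwP P hP, ?_, ?_, ?_⟩
    · rintro X Y hY ⟨i, q, hiq⟩
      refine wr_summand xs (i.lTensor F) (q.lTensor F) ?_ hY
      rw [← LinearMap.lTensor_comp, hiq, LinearMap.lTensor_id]
    · intro Y Y₁ Y₂ f g hf hg hfg h1 h2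
      obtain ⟨a, b, d⟩ := hex _ _ _ f g hf (LinearMap.exact_iff.2 hfg) hg
      exact wr_ext xs _ _ a b d h1 h2
    · rintro X hX K ⟨L, P, ⟨eL⟩, hPf, hP, f, hf, ⟨e⟩⟩
      obtain ⟨i, hi, hif⟩ := hsyz L P K f hf e
      obtain ⟨a, b, d⟩ := hex _ _ _ i f hi hif hf
      have hL : IsWeaklyRegular (F ⊗[R] L) xs :=
        ((eL.lTensor F).isWeaklyRegular_congr xs).2 hX
      exact wr_ker xs _ _ a b d (hwP P hP) hL
  -- syzygies of `R ⧸ p` are bad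
  let M : ModuleCat.{u} R := ModuleCat.of R (R ⧸ p.asIdeal)
  have hbad : ∀ m : ℕ, m < xs.length → ∀ K : ModuleCat.{u} R, IsSyz R m M K →
      Bad p.asIdeal (xs.take m) (F ⊗[R] K) := by
    intro m
    induction m with
    | zero =>
      rintro - K ⟨e⟩
      rw [List.take_zero]
      let k : K := e.symm (Ideal.Quotient.mk p.asIdeal 1 : R ⧸ p.asIdeal)
      refine ⟨(1 : F) ⊗ₜ k, ?_, ?_⟩
      · intro h0
        have h1 : TensorProduct.mk R F K 1 k = 0 := h0
        rw [IsLocalizedModule.eq_zero_iff p.asIdeal.primeCompl] at h1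
        obtain ⟨t, ht⟩ := h1
        have h2 : e ((t : R) • k) = 0 := by
          have h3 : (t : R) • k = 0 := ht
          rw [h3, map_zero]
        rw [map_smul, LinearEquiv.apply_symm_apply] at h2
        have h4 : (Ideal.Quotient.mk p.asIdeal ((t : R) • 1) : R ⧸ p.asIdeal) = 0 := h2
        rw [Ideal.Quotient.eq_zero_iff_mem, smul_eq_mul, mul_one] at h4
        exact t.2 h4
      · intro a ha
        rw [← TensorProduct.tmul_smul]
        have h3 : a • k = 0 := by
          rw [← map_smul]
          have h4 : (Ideal.Quotient.mk p.asIdeal (a • 1) : R ⧸ p.asIdeal) = 0 := by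
            rw [Ideal.Quotient.eq_zero_iff_mem, smul_eq_mul, mul_one]; exact ha
          exact (congrArg e.symm h4).trans (map_zero _)
        rw [h3, TensorProduct.tmul_zero]
    | succ m ih =>
      rintro hm K ⟨L, P, hL, hPf, hP, f, hf, ⟨e⟩⟩
      obtain ⟨i, hi, hif⟩ := hsyz L P K f hf e
      obtain ⟨a, b, d⟩ := hex _ _ _ i f hi hif hf
      have hm' : m < xs.length := by omega
      rw [← List.take_concat_get' xs m hm']
      refine bad_syz p.asIdeal _ (hmem _ (List.getElem_mem hm')) (xs.drop (m + 1)) _ _ _ a b d ?_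
        (ih hm' L hL)
      rw [← List.drop_eq_getElem_cons hm', List.take_append_drop]
      exact hwP P hP
  have hexists : ∀ m : ℕ, ∃ K : ModuleCat.{u} R, Module.Finite R K ∧ IsSyz R m M K := by
    intro m
    induction m with
    | zero => exact ⟨M, inferInstanceAs (Module.Finite R (R ⧸ p.asIdeal)),
        ⟨LinearEquiv.refl R _⟩⟩
    | succ m ih =>
      obtain ⟨L, hLf, hL⟩ := ih
      obtain ⟨k, f, hf⟩ := Module.Finite.exists_fin' R L
      refine ⟨ModuleCat.of R (LinearMap.ker f), ?_, L, ModuleCat.of R (Fin k → R), hL, ?_, ?_,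
        f, hf, ⟨LinearEquiv.refl R _⟩⟩
      · exact inferInstanceAs (Module.Finite R (LinearMap.ker f))
      · exact inferInstanceAs (Module.Finite R (Fin k → R))
      · exact inferInstanceAs (Module.Projective R (Fin k → R))
  obtain ⟨K, -, hK⟩ := hexists s
  have hs : s < xs.length := by omega
  have h1 : IsWeaklyRegular (F ⊗[R] K) xs :=
    hgen M (inferInstanceAs (Module.Finite R (R ⧸ p.asIdeal))) K hK _ ⟨hres, hwG⟩
  refine bad_not_wr p.asIdeal _ (hmem _ (List.getElem_mem hs)) (xs.drop (s + 1)) _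
    (hbad s hs K hK) ?_
  rw [← List.drop_eq_getElem_cons hs, List.take_append_drop]
  exact h1

end main

/-- a resolving generator forces finite Krull dimension, with
`dim R ≤ s + Rfd_R(G) + 1`. -/
theorem stmt18 (R : Type u) [CommRing R] [IsNoetherianRing R] (s : ℕ)
    (G : ModuleCat.{u} R) [Module.Finite R G] (hG : Nontrivial G)
    (hgen : ∀ M : ModuleCat.{u} R, Module.Finite R M →
      ∀ K : ModuleCat.{u} R, IsSyz R s M K → K ∈ resCl R G) :
    ringKrullDim R ≠ ⊤ ∧
      ringKrullDim R ≤ (((s : ℕ∞) + rfdE R G + 1 : ℕ∞) : WithBot ℕ∞) := by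
  have h : ringKrullDim R ≤ ((s + 1 : ℕ) : WithBot ℕ∞) :=
    iSup_le fun c => by exact_mod_cast chain_length_le R s G hgen c
  refine ⟨fun htop => ?_, h.trans ?_⟩
  · rw [htop, top_le_iff] at h
    exact absurd h (WithBot.coe_injective.ne (ENat.natCast_ne_top (s + 1)))
  · have : ((s + 1 : ℕ) : ℕ∞) ≤ (s : ℕ∞) + rfdE R G + 1 := by
      push_cast
      gcongr
      exact le_self_add
    exact WithBot.coe_le_coe.2 this
end
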